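/- arXiv:2509.01948 — 3 statements merged into one kernel-verified Lean document; each statement's English description precedes it below -/
import Mathlib

section
/- Let X be a standard Borel space and D a locally countable Borel directed graph on X whose underlying graph has finite Borel chromatic number. Then there exists a Borel quasi-kernel in D, i.e., a Borel set M ⊆ X that is independent in the underlying graph of D and satisfies ρ(x, M) ≤ 2 for every x ∈ X, where ρ denotes directed distance. -/
/-!
A quasi-kernel is built by induction on the number of colors, as in the Chvátal–Lovász theorem:
remove the last color class `C` and its in-neighbors, take a quasi-kernel `M` of what is left, and
add to `M` the points of `C` without an out-neighbor in `M`. The resulting set is Borel because the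
in-neighbors of a Borel set form a Borel set, by the Lusin–Novikov theorem: the image of a
countable-to-one Borel map `f` is Borel.

For Lusin–Novikov, make `f` continuous on a Polish space. If its range is not Borel, then it cannot
be separated from its complement by a Borel set. Inseparability of `f '' A` passes to the set
`f '' A₀ ∩ f '' A₁` for suitable small disjoint closed `A₀, A₁ ⊆ A`: otherwise, outside a Borel
set that is itself separated from the complement, `f` is injective on `A`, and the Lusin–Souslin
theorem applies. Splitting all pieces of a level at once, one obtains a Cantor scheme such that all
members of each level share a value of `f`; these values converge to a point whose fiber contains a
copy of the Cantor space.
-/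

open Set Filter Topology MeasureTheory

section Splitting

variable {Z : Type*} [MetricSpace Z]

/-- The pair `A'` consists of two disjoint closed subsets of `A` of diameter at most `ε`: one step
in the construction of a Cantor scheme. The pair is indexed by `Bool` to match
`CantorScheme.inducedMap`. -/
structure IsSplitting (ε : ENNReal) (A : Set Z) (A' : Bool → Set Z) : Prop where
  isClosed : ∀ b, IsClosed (A' b)
  subset : ∀ b, A' b ⊆ A
  ediam_le : ∀ b, Metric.ediam (A' b) ≤ ε
  disjoint : Disjoint (A' false) (A' true)

theorem IsSplitting.inter {ε : ENNReal} {A B : Set Z} {K : Bool → Set Z}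
    (hK : IsSplitting ε B K) (hA : IsClosed A) : IsSplitting ε A fun b => A ∩ K b where
  isClosed b := hA.inter (hK.isClosed b)
  subset _ := inter_subset_left
  ediam_le b := (Metric.ediam_mono inter_subset_right).trans (hK.ediam_le b)
  disjoint := hK.disjoint.mono inter_subset_right inter_subset_right

theorem exists_mem_countableBasis_closure_subset_ediam_le [SecondCountableTopology Z]
    {ε : ENNReal} (hε : 0 < ε) {z : Z} {s : Set Z} (hs : s ∈ 𝓝 z) :
    ∃ u ∈ TopologicalSpace.countableBasis Z, z ∈ u ∧ closure u ⊆ closure s ∧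
      Metric.ediam (closure u) ≤ ε := by
  have hnhds : s ∩ Metric.eball z (ε / 2) ∈ 𝓝 z :=
    inter_mem hs (Metric.eball_mem_nhds z (ENNReal.half_pos hε.ne'))
  obtain ⟨u, hu, hzu, hus⟩ :=
    (TopologicalSpace.isBasis_countableBasis Z).mem_nhds_iff.1 hnhds
  refine ⟨u, hu, hzu, closure_mono (hus.trans inter_subset_left), ?_⟩
  calc Metric.ediam (closure u) = Metric.ediam u := Metric.ediam_closure u
    _ ≤ Metric.ediam (Metric.eball z (ε / 2)) := Metric.ediam_mono (hus.trans inter_subset_right)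
    _ ≤ 2 * (ε / 2) := Metric.ediam_eball_le
    _ = ε := ENNReal.mul_div_cancel (by simp) (by simp)

theorem exists_countable_isSplitting_separating (Z : Type*) [MetricSpace Z]
    [SecondCountableTopology Z] {ε : ENNReal} (hε : 0 < ε) :
    ∃ 𝒦 : Set (Bool → Set Z), 𝒦.Countable ∧ (∀ K ∈ 𝒦, IsSplitting ε univ K) ∧
      ∀ z w, z ≠ w → ∃ K ∈ 𝒦, z ∈ K false ∧ w ∈ K true := by
  let closures : Set (Set Z) := closure '' TopologicalSpace.countableBasis Z
  have hclosures : closures.Countable := (TopologicalSpace.countable_countableBasis Z).image _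
  refine ⟨{K | IsSplitting ε univ K} ∩ univ.pi fun _ => closures,
    (countable_univ_pi fun _ => hclosures).mono inter_subset_right, fun K hK => hK.1,
    fun z w hzw => ?_⟩
  obtain ⟨s, hs, t, ht, hst⟩ := exists_nhds_disjoint_closure hzw
  obtain ⟨u, hu, hzu, hus, hudiam⟩ := exists_mem_countableBasis_closure_subset_ediam_le hε hs
  obtain ⟨v, hv, hwv, hvt, hvdiam⟩ := exists_mem_countableBasis_closure_subset_ediam_le hε ht
  refine ⟨fun b => closure (bif b then v else u), ⟨⟨?_, ?_, ?_, ?_⟩, ?_⟩, ?_, ?_⟩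
  · exact fun _ => isClosed_closure
  · exact fun _ => subset_univ _
  · exact Bool.forall_bool.2 ⟨hudiam, hvdiam⟩
  · exact hst.mono hus hvt
  · exact fun b _ => mem_image_of_mem closure (by cases b <;> assumption)
  · exact subset_closure hzu
  · exact subset_closure hwv

end Splitting

section Analytic

variable {X : Type*} [TopologicalSpace X]

theorem analyticSet_inter [T2Space X] {S T : Set X} (hS : AnalyticSet S) (hT : AnalyticSet T) :
    AnalyticSet (S ∩ T) := by
  rw [inter_eq_iInter]
  exact .iInter (Bool.forall_bool.2 ⟨hT, hS⟩)

theorem analyticSet_biInter [PolishSpace X] {ι : Type*} {s : Set ι} (hs : s.Countable)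
    {T : ι → Set X} (hT : ∀ i ∈ s, AnalyticSet (T i)) : AnalyticSet (⋂ i ∈ s, T i) := by
  have := hs.to_subtype
  rw [biInter_eq_iInter]
  rcases isEmpty_or_nonempty s with _ | _
  · rw [iInter_of_empty]
    exact isClosed_univ.analyticSet
  · exact .iInter fun i => hT i i.2

end Analytic

section Separation

theorem measurablySeparable_iUnion_left {X ι : Type*} [Countable ι] [MeasurableSpace X]
    {s : ι → Set X} {t : Set X} (h : ∀ i, MeasurablySeparable (s i) t) :
    MeasurablySeparable (⋃ i, s i) t := by
  choose u hsu htu hu using h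
  exact ⟨⋃ i, u i, iUnion_mono hsu, disjoint_iUnion_right.2 htu, .iUnion hu⟩

variable {X Z : Type*} [TopologicalSpace X] [MeasurableSpace X] [MeasurableSpace Z]
  [StandardBorelSpace Z] {f : Z → X} {T : Set X} {A : Set Z}

theorem exists_measurableSet_superset_injOn [T2Space X] [SecondCountableTopology X]
    [OpensMeasurableSpace X] (hf : Measurable f) (hT : AnalyticSet T) (hA : MeasurableSet A)
    (hinj : InjOn f (A ∩ f ⁻¹' T)) :
    ∃ V, MeasurableSet V ∧ T ⊆ V ∧ InjOn f (A ∩ f ⁻¹' V) := by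
  obtain ⟨e, he, hsep⟩ := exists_seq_separating Z MeasurableSet.empty univ
  have hV (n : ℕ) : MeasurablySeparable T (f '' (A ∩ e n) ∩ f '' (A \ e n)) := by
    refine hT.measurablySeparable (analyticSet_inter ((hA.inter (he n)).analyticSet_image hf)
      ((hA.diff (he n)).analyticSet_image hf)) (disjoint_left.2 ?_)
    rintro _ hzT ⟨⟨z, hz, rfl⟩, w, hw, hwz⟩
    have hzw : w = z := hinj ⟨hw.1, by rwa [mem_preimage, hwz]⟩ ⟨hz.1, hzT⟩ hwz
    exact hw.2 (hzw ▸ hz.2)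
  choose V hTV hdisj hVmeas using hV
  refine ⟨⋂ n, V n, .iInter hVmeas, subset_iInter hTV, fun z hz w hw hzw => ?_⟩
  refine hsep z trivial w trivial fun n => ?_
  have hfz : f z ∈ V n := mem_iInter.1 hz.2 n
  by_contra hne
  refine disjoint_left.1 (hdisj n) ?_ hfz
  rcases not_iff.1 hne with h
  by_cases hze : z ∈ e n
  · exact ⟨⟨z, ⟨hz.1, hze⟩, rfl⟩, w, ⟨hw.1, fun hwe => h.2 hwe hze⟩, hzw.symm⟩
  · exact ⟨⟨w, ⟨hw.1, h.1 hze⟩, hzw.symm⟩, z, ⟨hz.1, hze⟩, rfl⟩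

theorem measurablySeparable_compl_range_of_injOn [T2Space X] [SecondCountableTopology X]
    [OpensMeasurableSpace X] (hf : Measurable f) (hT : AnalyticSet T) (hA : MeasurableSet A)
    (hinj : InjOn f (A ∩ f ⁻¹' T)) : MeasurablySeparable (T ∩ f '' A) (range f)ᶜ := by
  obtain ⟨V, hV, hTV, hVinj⟩ := exists_measurableSet_superset_injOn hf hT hA hinj
  refine ⟨f '' (A ∩ f ⁻¹' V), ?_, ?_, (hA.inter (hf hV)).image_of_measurable_injOn hf hVinj⟩
  · rintro _ ⟨hzT, z, hz, rfl⟩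
    exact mem_image_of_mem f ⟨hz, hTV hzT⟩
  · exact disjoint_compl_left_iff_subset.2 (image_subset_range _ _)

end Separation

section Level

variable {X Z : Type*} [MeasurableSpace X] [MetricSpace Z]

/-- A level of the Cantor scheme under construction: closed sets `A l`, for the words `l` of length
`n`, such that no Borel set separates the set of their common values under `f` from the complement
of the range of `f`. The values of `A` at other words are junk. -/
structure IsInseparableLevel (f : Z → X) (n : ℕ) (A : List Bool → Set Z) : Prop where
  isClosed : ∀ l, l.length = n → IsClosed (A l)
  not_measurablySeparable :
    ¬ MeasurablySeparable (⋂ l ∈ {l : List Bool | l.length = n}, f '' A l) (range f)ᶜ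

theorem IsInseparableLevel.nonempty {f : Z → X} {n : ℕ} {A : List Bool → Set Z}
    (hA : IsInseparableLevel f n A) :
    (⋂ l ∈ {l : List Bool | l.length = n}, f '' A l).Nonempty := by
  rw [nonempty_iff_ne_empty]
  intro hempty
  exact hA.not_measurablySeparable ⟨∅, hempty.subset, disjoint_empty _, .empty⟩

/-- A Cantor scheme of closed sets with vanishing diameter, used to embed the Cantor space into a
fiber. As in `CantorScheme`, words are read from right to left: the children of `l` are `b :: l`. -/
structure IsClosedCantorScheme (S : List Bool → Set Z) : Prop where
  isClosed : ∀ l, IsClosed (S l)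
  isSplitting : ∀ l, IsSplitting (l.length + 1 : ℕ)⁻¹ (S l) fun b => S (b :: l)

end Level

section CantorScheme

variable {X Z : Type*} [TopologicalSpace X] [PolishSpace X] [MeasurableSpace X] [BorelSpace X]
  [MetricSpace Z] [CompleteSpace Z] [SecondCountableTopology Z] [MeasurableSpace Z] [BorelSpace Z]
  {f : Z → X}

theorem exists_isSplitting_not_measurablySeparable (hf : Measurable f) {T : Set X}
    (hT : AnalyticSet T) {A : Set Z} (hA : IsClosed A) {ε : ENNReal} (hε : 0 < ε)
    (h : ¬ MeasurablySeparable (T ∩ f '' A) (range f)ᶜ) :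
    ∃ A', IsSplitting ε A A' ∧ ¬ MeasurablySeparable (T ∩ ⋂ b, f '' A' b) (range f)ᶜ := by
  obtain ⟨𝒦, h𝒦, hsplit, hsep⟩ := exists_countable_isSplitting_separating Z hε
  have := h𝒦.to_subtype
  contrapose! h
  obtain ⟨U, hpairsU, hUrange, hU⟩ :
      MeasurablySeparable (⋃ K : 𝒦, T ∩ ⋂ b, f '' (A ∩ (K : Bool → Set Z) b)) (range f)ᶜ :=
    measurablySeparable_iUnion_left fun K => h _ ((hsplit K K.2).inter hA)
  have hinj : InjOn f (A ∩ f ⁻¹' (T ∩ Uᶜ)) := by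
    rintro z ⟨hzA, hzT, hzU⟩ w ⟨hwA, -⟩ hzw
    by_contra hne
    obtain ⟨K, hK, hzK, hwK⟩ := hsep z w hne
    exact hzU (hpairsU (mem_iUnion.2 ⟨⟨K, hK⟩, hzT, mem_iInter.2
      (Bool.forall_bool.2 ⟨⟨z, ⟨hzA, hzK⟩, rfl⟩, w, ⟨hwA, hwK⟩, hzw.symm⟩)⟩))
  obtain ⟨V, hTV, hVrange, hV⟩ := measurablySeparable_compl_range_of_injOn hf
    (analyticSet_inter hT hU.compl.analyticSet) hA.measurableSet hinj
  refine ⟨U ∪ V, fun x hx => ?_, hUrange.union_right hVrange, hU.union hV⟩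
  exact or_iff_not_imp_left.2 fun hxU => hTV ⟨⟨hx.1, hxU⟩, hx.2⟩

theorem exists_forall_isSplitting_not_measurablySeparable (hf : Measurable f) {ι : Type*}
    {s : Set ι} (hs : s.Finite) {ε : ENNReal} (hε : 0 < ε) {A : ι → Set Z}
    (hA : ∀ i ∈ s, IsClosed (A i)) {T : Set X} (hT : AnalyticSet T)
    (h : ¬ MeasurablySeparable (T ∩ ⋂ i ∈ s, f '' A i) (range f)ᶜ) :
    ∃ A' : ι → Bool → Set Z, (∀ i ∈ s, IsSplitting ε (A i) (A' i)) ∧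
      ¬ MeasurablySeparable (T ∩ ⋂ i ∈ s, ⋂ b, f '' A' i b) (range f)ᶜ := by
  classical
  induction s, hs using Set.Finite.induction_on generalizing T with
  | empty => exact ⟨fun _ _ => ∅, by simp, by simpa using h⟩
  | @insert a s ha hs ih =>
    obtain ⟨hAa, hAs⟩ := forall_mem_insert.1 hA
    have himage {B : Set Z} (hB : IsClosed B) : AnalyticSet (f '' B) :=
      hB.measurableSet.analyticSet_image hf
    rw [biInter_insert, inter_left_comm, inter_comm] at h
    obtain ⟨Aa, hAa_split, hAa_insep⟩ := exists_isSplitting_not_measurablySeparable hf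
      (analyticSet_inter hT (analyticSet_biInter hs.countable fun i hi => himage (hAs i hi)))
      hAa hε h
    rw [inter_right_comm] at hAa_insep
    obtain ⟨A', hA'_split, hA'_insep⟩ := ih hAs
      (analyticSet_inter hT (.iInter fun b => himage (hAa_split.isClosed b))) hAa_insep
    have hupdate : ∀ i ∈ s, Function.update A' a Aa i = A' i := fun i hi =>
      Function.update_of_ne (ne_of_mem_of_not_mem hi ha) _ _
    refine ⟨Function.update A' a Aa, forall_mem_insert.2 ⟨?_, fun i hi => ?_⟩, ?_⟩
    · rwa [Function.update_self]
    · rw [hupdate i hi]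
      exact hA'_split i hi
    · rwa [biInter_insert, Function.update_self, iInter₂_congr fun i hi => by rw [hupdate i hi],
        ← inter_assoc]

theorem IsInseparableLevel.exists_succ (hf : Measurable f) {n : ℕ} {A : List Bool → Set Z}
    (hA : IsInseparableLevel f n A) {ε : ENNReal} (hε : 0 < ε) :
    ∃ A', IsInseparableLevel f (n + 1) A' ∧
      ∀ l, l.length = n → IsSplitting ε (A l) fun b => A' (b :: l) := by
  obtain ⟨A', hA', hinsep⟩ := exists_forall_isSplitting_not_measurablySeparable hf
    (List.finite_length_eq Bool n) hε hA.isClosed MeasurableSet.univ.analyticSet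
    (by simpa only [univ_inter] using hA.not_measurablySeparable)
  refine ⟨fun l => A' l.tail (l.headD false), ⟨?_, ?_⟩, hA'⟩
  · rintro (_ | ⟨b, l⟩) hl
    · simp at hl
    · exact (hA' l (Nat.succ_injective hl)).isClosed b
  · convert hinsep using 2
    ext x
    simp only [univ_inter, mem_iInter, mem_ofPred_eq]
    refine ⟨fun h l hl b => h (b :: l) (congrArg Nat.succ hl), ?_⟩
    rintro h (_ | ⟨b, l⟩) hl
    · simp at hl
    · exact h l (Nat.succ_injective hl) b

theorem exists_isClosedCantorScheme (hf : Measurable f)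
    (h : ¬ MeasurablySeparable (range f) (range f)ᶜ) :
    ∃ S : List Bool → Set Z, IsClosedCantorScheme S ∧
      ∀ n, (⋂ l ∈ {l : List Bool | l.length = n}, f '' S l).Nonempty := by
  choose! next hnext hsplit using fun n A (hA : IsInseparableLevel f n A) =>
    hA.exists_succ hf (ε := (n + 1 : ℕ)⁻¹) (by simp)
  let A : ℕ → List Bool → Set Z := Nat.rec (fun _ => univ) next
  have hA (n : ℕ) : IsInseparableLevel f n (A n) := by
    induction n with
    | zero => exact ⟨fun _ _ => isClosed_univ, by simpa [A, List.length_eq_zero_iff] using h⟩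
    | succ n ih => exact hnext n _ ih
  refine ⟨fun l => A l.length l, ⟨fun l => (hA _).isClosed l rfl, fun l => ?_⟩, fun n => ?_⟩
  · exact hsplit l.length _ (hA _) l rfl
  · convert (hA n).nonempty using 4 with l hl
    exact hl ▸ rfl

end CantorScheme

section Fiber

open CantorScheme

variable {X Z : Type*} [MetricSpace Z] {S : List Bool → Set Z}

namespace IsClosedCantorScheme

theorem closureAntitone (hS : IsClosedCantorScheme S) : ClosureAntitone S :=
  CantorScheme.Antitone.closureAntitone (fun l => (hS.isSplitting l).subset) hS.isClosed

theorem disjoint (hS : IsClosedCantorScheme S) : CantorScheme.Disjoint S := by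
  rintro l (_ | _) (_ | _) hne
  · exact absurd rfl hne
  · exact (hS.isSplitting l).disjoint
  · exact (hS.isSplitting l).disjoint.symm
  · exact absurd rfl hne

theorem vanishingDiam (hS : IsClosedCantorScheme S) : VanishingDiam S := by
  intro b
  rw [← tendsto_add_atTop_iff_nat 1]
  refine tendsto_of_tendsto_of_tendsto_of_le_of_le tendsto_const_nhds
    ((tendsto_add_atTop_iff_nat 1).2 ENNReal.tendsto_inv_nat_nhds_zero) (fun _ => zero_le)
    fun n => ?_
  calc Metric.ediam (S (PiNat.res b (n + 1)))
      ≤ (((PiNat.res b n).length + 1 : ℕ) : ENNReal)⁻¹ :=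
        (hS.isSplitting (PiNat.res b n)).ediam_le (b n)
    _ = ((n + 1 : ℕ) : ENNReal)⁻¹ := by rw [PiNat.res_length]

end IsClosedCantorScheme

theorem tendsto_inducedMap [TopologicalSpace X] {f : Z → X} (hf : Continuous f)
    (hS : VanishingDiam S) {x : ℕ → X} (hx : ∀ l, x l.length ∈ f '' S l)
    (b : (inducedMap S).1) : Tendsto x atTop (𝓝 (f ((inducedMap S).2 b))) := by
  choose z hz hfz using fun n => hx (PiNat.res b n)
  have hz_tendsto : Tendsto z atTop (𝓝 ((inducedMap S).2 b)) := by
    rw [tendsto_iff_edist_tendsto_0]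
    exact tendsto_of_tendsto_of_tendsto_of_le_of_le tendsto_const_nhds (hS b) (fun _ => zero_le)
      fun n => Metric.edist_le_ediam_of_mem (hz n) (map_mem b n)
  simpa only [Function.comp_def, hfz, PiNat.res_length] using (hf.tendsto _).comp hz_tendsto

theorem uncountable_nat_arrow_bool : Uncountable (ℕ → Bool) :=
  Cardinal.aleph0_lt_mk_iff.1 (by simpa using Cardinal.cantor Cardinal.aleph0)

theorem IsClosedCantorScheme.exists_not_countable_preimage_singleton [CompleteSpace Z]
    [TopologicalSpace X] [T2Space X] {f : Z → X} (hf : Continuous f) (hS : IsClosedCantorScheme S)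
    (hlevel : ∀ n, (⋂ l ∈ {l : List Bool | l.length = n}, f '' S l).Nonempty) :
    ∃ y, ¬ (f ⁻¹' {y}).Countable := by
  choose x hx using hlevel
  have hxS (l : List Bool) : x l.length ∈ f '' S l := mem_iInter₂.1 (hx l.length) l rfl
  have hdom : (inducedMap S).1 = univ := hS.closureAntitone.map_of_vanishingDiam hS.vanishingDiam
    fun l => (hxS l).imp fun _ hz => hz.1
  let g (b : ℕ → Bool) : Z := (inducedMap S).2 ⟨b, hdom ▸ mem_univ b⟩
  have hg : Function.Injective g := fun _ _ h => congrArg Subtype.val (hS.disjoint.map_injective h)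
  have hlim (b : ℕ → Bool) : Tendsto x atTop (𝓝 (f (g b))) :=
    tendsto_inducedMap hf hS.vanishingDiam hxS _
  refine ⟨f (g fun _ => false), fun hcount => ?_⟩
  have hfiber : range g ⊆ f ⁻¹' {f (g fun _ => false)} :=
    range_subset_iff.2 fun b => tendsto_nhds_unique (hlim b) (hlim _)
  have := (hcount.mono hfiber).to_subtype
  exact uncountable_nat_arrow_bool.not_countable (rangeFactorization_injective.2 hg).countable

end Fiber

section LusinNovikov

variable {X Z : Type*} [MeasurableSpace X]

theorem measurableSet_range_of_continuous_of_countable_fibers [TopologicalSpace X] [PolishSpace X]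
    [BorelSpace X] [TopologicalSpace Z] [PolishSpace Z] {f : Z → X} (hf : Continuous f)
    (hcount : ∀ x, (f ⁻¹' {x}).Countable) : MeasurableSet (range f) := by
  let := TopologicalSpace.upgradeIsCompletelyMetrizable Z
  borelize Z
  have hsep : MeasurablySeparable (range f) (range f)ᶜ := by
    by_contra hinsep
    obtain ⟨S, hS, hlevel⟩ := exists_isClosedCantorScheme hf.measurable hinsep
    obtain ⟨y, hy⟩ := hS.exists_not_countable_preimage_singleton hf hlevel
    exact hy (hcount y)
  obtain ⟨B, hB, hBrange, hBmeas⟩ := hsep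
  rwa [hB.antisymm (disjoint_compl_left_iff_subset.1 hBrange)]

theorem measurableSet_range_of_countable_fibers [MeasurableSpace.CountablySeparated X]
    [MeasurableSpace Z] [StandardBorelSpace Z] {f : Z → X} (hf : Measurable f)
    (hcount : ∀ x, (f ⁻¹' {x}).Countable) : MeasurableSet (range f) := by
  obtain ⟨e, he, hinj⟩ := MeasurableSpace.measurable_injection_nat_bool_of_countablySeparated X
  have : PolishSpace (ℕ → Bool) := ⟨⟩
  let := upgradeStandardBorel Z
  obtain ⟨_, -, hcont, _⟩ := (he.comp hf).exists_continuous
  have hrange : MeasurableSet (range (e ∘ f)) := by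
    refine measurableSet_range_of_continuous_of_countable_fibers hcont fun y => ?_
    rw [preimage_comp]
    rcases (subsingleton_singleton.preimage hinj).eq_empty_or_singleton with h | ⟨x, h⟩
    · rw [h, preimage_empty]
      exact countable_empty
    · rw [h]
      exact hcount x
  rw [range_comp] at hrange
  simpa only [hinj.preimage_image] using he hrange

theorem measurableSet_image_of_countable_fibers [MeasurableSpace.CountablySeparated X]
    [MeasurableSpace Z] [StandardBorelSpace Z] {f : Z → X} (hf : Measurable f) {s : Set Z}
    (hs : MeasurableSet s) (hcount : ∀ x, (s ∩ f ⁻¹' {x}).Countable) :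
    MeasurableSet (f '' s) := by
  have := hs.standardBorel
  rw [image_eq_range]
  refine measurableSet_range_of_countable_fibers (hf.comp measurable_subtype_coe) fun x => ?_
  refine MapsTo.countable_of_injOn (fun z hz => ?_) Subtype.val_injective.injOn (hcount x)
  exact ⟨z.2, hz⟩

theorem measurableSet_image_fst_of_countable_sections {Y : Type*} [MeasurableSpace Y]
    [StandardBorelSpace X] [StandardBorelSpace Y] {R : Set (X × Y)} (hR : MeasurableSet R)
    (hcount : ∀ x, {y | (x, y) ∈ R}.Countable) : MeasurableSet (Prod.fst '' R) := by
  refine measurableSet_image_of_countable_fibers measurable_fst hR fun x => ?_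
  refine ((hcount x).image (Prod.mk x)).mono ?_
  rintro ⟨x, y⟩ ⟨hxy, rfl⟩
  exact mem_image_of_mem _ hxy

theorem measurableSet_relPreimage_of_countable_sections {Y : Type*} [MeasurableSpace Y]
    [StandardBorelSpace X] [StandardBorelSpace Y] {R : SetRel X Y} (hR : MeasurableSet R)
    (hcount : ∀ x, {y | (x, y) ∈ R}.Countable) {B : Set Y} (hB : MeasurableSet B) :
    MeasurableSet (R.preimage B) := by
  have himage : R.preimage B = Prod.fst '' (R ∩ Prod.snd ⁻¹' B) := by
    ext x
    simp [and_comm]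
  rw [himage]
  exact measurableSet_image_fst_of_countable_sections (hR.inter (measurable_snd hB))
    fun x => (hcount x).mono fun _ hy => hy.1

end LusinNovikov

section QuasiKernel

variable {V : Type*} {D : SetRel V V}

/-- `M` is a quasi-kernel of the subgraph of the directed graph `D` induced on `Y`: it is
independent and every vertex of `Y` reaches it by a directed path in `Y` of length at most `2`. -/
structure IsQuasiKernelOn (D : SetRel V V) (Y M : Set V) : Prop where
  subset : M ⊆ Y
  independent : ∀ x ∈ M, ∀ y ∈ M, (x, y) ∉ D
  reaches : ∀ x ∈ Y, x ∈ M ∨ x ∈ D.preimage M ∨ x ∈ D.preimage (Y ∩ D.preimage M)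

theorem IsQuasiKernelOn.union_sdiff_preimage {Y C M : Set V} (hCY : C ⊆ Y)
    (hC : ∀ x ∈ C, ∀ y ∈ C, (x, y) ∉ D) (hM : IsQuasiKernelOn D (Y \ (C ∪ D.preimage C)) M) :
    IsQuasiKernelOn D Y (M ∪ C \ D.preimage M) where
  subset := union_subset (hM.subset.trans sdiff_subset) (sdiff_subset.trans hCY)
  independent := by
    rintro x (hx | hx) y (hy | hy) hxy
    · exact hM.independent x hx y hy hxy
    · exact (hM.subset hx).2 (.inr ⟨y, hy.1, hxy⟩)
    · exact hx.2 ⟨y, hy, hxy⟩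
    · exact hC x hx.1 y hy.1 hxy
  reaches x hx := by
    have hmono : D.preimage M ⊆ D.preimage (M ∪ C \ D.preimage M) :=
      SetRel.preimage_mono subset_union_left
    by_cases hxC : x ∈ C
    · by_cases hxM : x ∈ D.preimage M
      · exact .inr (.inl (hmono hxM))
      · exact .inl (.inr ⟨hxC, hxM⟩)
    by_cases hxN : x ∈ D.preimage C
    · obtain ⟨y, hyC, hxy⟩ := hxN
      by_cases hyM : y ∈ D.preimage M
      · exact .inr (.inr ⟨y, ⟨hCY hyC, hmono hyM⟩, hxy⟩)
      · exact .inr (.inl ⟨y, .inr ⟨hyC, hyM⟩, hxy⟩)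
    exact (hM.reaches x ⟨hx, not_or.2 ⟨hxC, hxN⟩⟩).imp .inl
      (.imp (@hmono x) fun h => SetRel.preimage_mono (inter_subset_inter sdiff_subset hmono) h)

theorem exists_measurableSet_isQuasiKernelOn [MeasurableSpace V]
    (hD : ∀ B, MeasurableSet B → MeasurableSet (D.preimage B)) {c : V → ℕ} (hc : Measurable c)
    (hcD : ∀ x y, (x, y) ∈ D → c x ≠ c y) (k : ℕ) {Y : Set V} (hY : MeasurableSet Y)
    (hYk : ∀ x ∈ Y, c x < k) : ∃ M, MeasurableSet M ∧ IsQuasiKernelOn D Y M := by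
  induction k generalizing Y with
  | zero =>
    exact ⟨∅, .empty, empty_subset _, by simp, fun x hx => absurd (hYk x hx) (Nat.not_lt_zero _)⟩
  | succ k ih =>
    let C := Y ∩ c ⁻¹' {k}
    have hC : MeasurableSet C := hY.inter (hc (measurableSet_singleton k))
    have hC_indep : ∀ x ∈ C, ∀ y ∈ C, (x, y) ∉ D := fun x hx y hy hxy =>
      hcD x y hxy (hx.2.trans hy.2.symm)
    have hcolors : ∀ x ∈ Y \ (C ∪ D.preimage C), c x < k := fun x hx =>
      (Nat.lt_succ_iff.1 (hYk x hx.1)).lt_of_ne fun hxk => hx.2 (.inl ⟨hx.1, hxk⟩)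
    obtain ⟨M, hM, hM_kernel⟩ := ih (hY.diff (hC.union (hD C hC))) hcolors
    exact ⟨M ∪ C \ D.preimage M, hM.union (hC.diff (hD M hM)),
      hM_kernel.union_sdiff_preimage inter_subset_left hC_indep⟩

end QuasiKernel

theorem borel_quasi_kernel_general {X : Type*} [MeasurableSpace X] [StandardBorelSpace X]
    (D : Set (X × X)) (hDmeas : MeasurableSet D) (hout : ∀ x : X, {y | (x, y) ∈ D}.Countable)
    (hchrom : ∃ k : ℕ, ∃ c : X → Fin k, Measurable c ∧
      ∀ x y : X, ((x, y) ∈ D ∨ (y, x) ∈ D) → c x ≠ c y) :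
    ∃ M : Set X, MeasurableSet M ∧
      (∀ x ∈ M, ∀ y ∈ M, (x, y) ∉ D) ∧
      (∀ x : X, x ∈ M ∨ (∃ y ∈ M, (x, y) ∈ D) ∨
        ∃ y z : X, (x, y) ∈ D ∧ (y, z) ∈ D ∧ z ∈ M) := by
  obtain ⟨k, c, hc, hcD⟩ := hchrom
  obtain ⟨M, hM, hkernel⟩ := exists_measurableSet_isQuasiKernelOn (D := D)
    (fun _ => measurableSet_relPreimage_of_countable_sections hDmeas hout)
    ((measurable_of_countable Fin.val).comp hc)
    (fun x y hxy h => hcD x y (.inl hxy) (Fin.ext h)) k .univ fun x _ => (c x).isLt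
  refine ⟨M, hM, hkernel.independent,
    fun x => (hkernel.reaches x trivial).imp_right (.imp_right ?_)⟩
  rintro ⟨y, ⟨-, z, hz, hyz⟩, hxy⟩
  exact ⟨y, z, hxy, hyz, hz⟩

/-- **Theorem (Borel quasi-kernel).** Let `X` be a standard Borel space and `D` a locally
countable Borel directed graph on `X` whose underlying graph has finite Borel chromatic
number. Then there is a Borel quasi-kernel in `D`: a Borel set `M` that is independent in
the underlying graph of `D` and such that every vertex has directed distance at most `2`
to `M`. -/
theorem borel_quasi_kernel {X : Type*} [MeasurableSpace X] [StandardBorelSpace X]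
    (D : Set (X × X)) (hDmeas : MeasurableSet D)
    (hirr : ∀ x : X, (x, x) ∉ D)
    (hloc : ∀ x : X, {y | (x, y) ∈ D}.Countable ∧ {y | (y, x) ∈ D}.Countable)
    (hchrom : ∃ k : ℕ, ∃ c : X → Fin k, Measurable c ∧
      ∀ x y : X, ((x, y) ∈ D ∨ (y, x) ∈ D) → c x ≠ c y) :
    ∃ M : Set X, MeasurableSet M ∧
      (∀ x ∈ M, ∀ y ∈ M, (x, y) ∉ D) ∧
      (∀ x : X, x ∈ M ∨ (∃ y ∈ M, (x, y) ∈ D) ∨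
        ∃ y z : X, (x, y) ∈ D ∧ (y, z) ∈ D ∧ z ∈ M) :=
  borel_quasi_kernel_general D hDmeas (fun x => (hloc x).1) hchrom
end

section
/- Let X be a standard Borel space and f : X → X a Borel function such that every point of X has at most 2 preimages under f (f is 2-to-1). Then the underlying graph of the directed graph D_f generated by f admits a Borel proper edge coloring with 4 colors: there is a Borel map assigning to each edge of the underlying graph one of 4 colors so that any two distinct edges sharing a vertex receive different colors. -/
/-!
A Borel function `f` that is at most two-to-one has a Borel labeling `l : X → Bool` of its points
separating the points of each fibre. Color the arc `(x, f x)` by recursion along the forward orbit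
of `x`: if the arc leaving `v` has color `a`, the two arcs entering `v` get distinct colors from
`{2, 3} \ {a}` and `{1, 3} \ {a}`, according to the labels of their sources. Since the pair from
which `(x, f x)` is colored depends only on `l x`, the arcs entering `x` may instead be colored from
the complementary pair, without knowing the future of `x`. The recursion can thus be restarted at
the vertices of any Borel set no two of which are consecutive. It also stops at cycles of length at
most two, which get color `0`, the remaining arc entering such a cycle point getting color `1`.

It remains to find a Borel set, containing no `x` together with `f x`, that meets every orbit not
ending in a fixed point. Fix a countable Borel coloring `k : X → ℕ` of the graph. If `k` or `l`
decreases infinitely often along an orbit, the ends of its descents serve. Otherwise, from some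
point on, `k` increases and `l` is constant. The points `x` with `k x < k (f x)` and `l x = l (f x)`
throughout their forward orbit form a set on which `f` is injective and, as `k` increases, all
backward orbits are finite; the parity of their lengths selects every other point.
-/

open Set Function Filter

section Labeling

variable {X Y : Type*}

/-- A function with at most two preimages of each point; repetition `a = b` is allowed. -/
def IsTwoToOne (f : X → Y) : Prop :=
  ∀ y, ∃ a b, ∀ x, f x = y → x = a ∨ x = b

lemma IsTwoToOne.not_lt_of_lt {α : Type*} [Preorder α] {f : X → Y} (h : IsTwoToOne f) (φ : X → α)
    {x y z : X} (hxy : f x = f y) (hyz : f y = f z) (hlt : φ x < φ y) : ¬φ y < φ z := by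
  intro hlt'
  obtain ⟨a, b, hab⟩ := h (f z)
  have hx := hab x (hxy.trans hyz)
  have hy := hab y hyz
  have hz := hab z rfl
  have hxy' : x ≠ y := ne_of_apply_ne φ hlt.ne
  have hyz' : y ≠ z := ne_of_apply_ne φ hlt'.ne
  have hxz' : x ≠ z := ne_of_apply_ne φ (hlt.trans hlt').ne
  grind

variable [MeasurableSpace X] [StandardBorelSpace X] [MeasurableSpace Y]
  [MeasurableEq Y] {f : X → Y}

lemma IsTwoToOne.measurableSet_exists_lt (h : IsTwoToOne f) (hf : Measurable f) {φ : X → ℝ}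
    (hφ : Measurable φ) (hinj : Injective φ) :
    MeasurableSet {x | ∃ y, f y = f x ∧ φ y < φ x} := by
  let E : Set (X × X) := {p | f p.2 = f p.1 ∧ φ p.2 < φ p.1}
  have hE : MeasurableSet E :=
    (measurableSet_eq_fun (hf.comp measurable_snd) (hf.comp measurable_fst)).inter
      (measurableSet_lt (hφ.comp measurable_snd) (hφ.comp measurable_fst))
  have hE_inj : InjOn Prod.fst E := by
    rintro ⟨x, y⟩ ⟨hy, hyx⟩ ⟨-, z⟩ ⟨hz, hzx⟩ rfl
    rcases lt_trichotomy (φ y) (φ z) with hyz | hyz | hzy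
    · exact (h.not_lt_of_lt φ (hy.trans hz.symm) hz hyz hzx).elim
    · rw [hinj hyz]
    · exact (h.not_lt_of_lt φ (hz.trans hy.symm) hy hzy hyx).elim
  have hE_image : {x | ∃ y, f y = f x ∧ φ y < φ x} = Prod.fst '' E := by
    ext x
    simp [E]
  rw [hE_image]
  exact hE.image_of_measurable_injOn measurable_fst hE_inj

lemma IsTwoToOne.exists_measurable_bool_injective_prodMk (h : IsTwoToOne f) (hf : Measurable f) :
    ∃ l : X → Bool, Measurable l ∧ Injective fun x ↦ (f x, l x) := by
  classical
  let φ := MeasureTheory.embeddingReal X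
  have hφ : MeasurableEmbedding φ := MeasureTheory.measurableEmbedding_embeddingReal X
  let U : Set X := {x | ∃ y, f y = f x ∧ φ y < φ x}
  have hU : MeasurableSet U := h.measurableSet_exists_lt hf hφ.measurable hφ.injective
  refine ⟨fun x ↦ decide (x ∈ U), measurable_to_bool (by simpa [preimage] using hU), ?_⟩
  intro x y hxy
  obtain ⟨hfxy, hU_iff⟩ : f x = f y ∧ (x ∈ U ↔ y ∈ U) := by simpa using hxy
  wlog hle : φ x ≤ φ y generalizing x y
  · exact (this hxy.symm hfxy.symm hU_iff.symm (le_of_not_ge hle)).symm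
  by_contra hne
  have hlt : φ x < φ y := hle.lt_of_ne (hφ.injective.ne hne)
  obtain ⟨z, hz, hzx⟩ := hU_iff.2 ⟨x, hfxy, hlt⟩
  exact h.not_lt_of_lt φ hz hfxy hzx hlt

end Labeling

section EventualMonotonicity

variable {α : Type*}

lemma frequently_lt_and_le_or_eventually_le [LinearOrder α] [WellFoundedLT α] (u : ℕ → α) :
    (∃ᶠ n in atTop, u (n + 1) < u n ∧ u (n + 1) ≤ u (n + 2)) ∨
      ∀ᶠ n in atTop, u n ≤ u (n + 1) := by
  refine or_iff_not_imp_left.2 fun hfreq ↦ ?_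
  obtain ⟨N, hN⟩ := eventually_atTop.1 (not_frequently.1 hfreq)
  refine eventually_atTop.2 ⟨N, fun n hn ↦ ?_⟩
  by_contra! hlt
  have hdesc (m : ℕ) : u (n + (m + 1)) < u (n + m) := by
    induction m with
    | zero => exact hlt
    | succ m ih => exact not_le.1 fun hle ↦ hN (n + m) (by lia) ⟨ih, hle⟩
  exact not_strictAnti_of_wellFoundedLT (fun m ↦ u (n + m)) (strictAnti_nat_of_succ_lt hdesc)

lemma eventually_eq_succ_of_eventually_le_succ [PartialOrder α] [WellFoundedGT α] {u : ℕ → α}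
    (h : ∀ᶠ n in atTop, u n ≤ u (n + 1)) : ∀ᶠ n in atTop, u (n + 1) = u n := by
  obtain ⟨N, hN⟩ := eventually_atTop.1 h
  have hmono : Monotone fun n ↦ u (N + n) := monotone_nat_of_le_succ fun n ↦ hN _ (by lia)
  obtain ⟨M, hM⟩ := WellFoundedGT.monotone_chain_condition ⟨_, hmono⟩
  replace hM (m : ℕ) (hm : M ≤ m) : u (N + M) = u (N + m) := hM m hm
  refine eventually_atTop.2 ⟨N + M, fun n hn ↦ ?_⟩
  obtain ⟨m, rfl⟩ := Nat.exists_eq_add_of_le hn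
  rw [add_assoc (N + M), add_assoc N, add_assoc N]
  exact (hM (M + (m + 1)) (by lia)).symm.trans (hM (M + m) (by lia))

end EventualMonotonicity

section Independence

variable {X : Type*} {f : X → X}

/-- Independence in the graph generated by `f`, with the loops at fixed points kept. -/
def IndependentUnder (f : X → X) (A : Set X) : Prop :=
  ∀ x ∈ A, f x ∉ A

lemma IndependentUnder.mono {A B : Set X} (hB : IndependentUnder f B) (h : A ⊆ B) :
    IndependentUnder f A :=
  fun x hx hfx ↦ hB x (h hx) (h hfx)

lemma IndependentUnder.ite {A B I : Set X} (hA : IndependentUnder f A)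
    (hB : IndependentUnder f B) (hI : f ⁻¹' I = I) : IndependentUnder f (I.ite A B) := by
  have hI_iff (x : X) : f x ∈ I ↔ x ∈ I := Set.ext_iff.1 hI x
  rintro x (⟨hx, hxI⟩ | ⟨hx, hxI⟩) (⟨hfx, hfxI⟩ | ⟨hfx, hfxI⟩)
  · exact hA x hx hfx
  · exact hfxI ((hI_iff x).2 hxI)
  · exact hxI ((hI_iff x).1 hfxI)
  · exact hB x hx hfx

/-- The points `x` such that `u` drops from `x` to `f x` but not from `f x` to `f (f x)`. -/
def descentEnds {α : Type*} [LinearOrder α] (f : X → X) (u : X → α) : Set X :=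
  {x | u (f x) < u x ∧ u (f x) ≤ u (f (f x))}

lemma independentUnder_descentEnds {α : Type*} [LinearOrder α] (f : X → X) (u : X → α) :
    IndependentUnder f (descentEnds f u) :=
  fun _ hx hfx ↦ hx.2.not_gt hfx.1

lemma frequently_mem_descentEnds_or_eventually_le {α : Type*} [LinearOrder α] [WellFoundedLT α]
    (f : X → X) (u : X → α) (x : X) :
    (∃ᶠ n in atTop, f^[n] x ∈ descentEnds f u) ∨
      ∀ᶠ n in atTop, u (f^[n] x) ≤ u (f^[n + 1] x) := by
  simpa only [descentEnds, mem_ofPred_eq, iterate_succ_apply'] using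
    frequently_lt_and_le_or_eventually_le fun n ↦ u (f^[n] x)

variable [MeasurableSpace X]

lemma measurableSet_descentEnds {α : Type*} [LinearOrder α] [Countable α] [MeasurableSpace α]
    [MeasurableSingletonClass α] (hf : Measurable f) {u : X → α} (hu : Measurable u) :
    MeasurableSet (descentEnds f u) :=
  ((hu.comp hf).prodMk hu (.of_discrete (s := {p : α × α | p.1 < p.2}))).inter
    ((hu.comp hf).prodMk (hu.comp (hf.comp hf)) (.of_discrete (s := {p : α × α | p.1 ≤ p.2})))

lemma IndependentUnder.exists_amalgam (hf : Measurable f) {A B : Set X} (hA : MeasurableSet A)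
    (hB : MeasurableSet B) (hA_ind : IndependentUnder f A) (hB_ind : IndependentUnder f B) :
    ∃ C, MeasurableSet C ∧ IndependentUnder f C ∧
      ∀ x, ((∃ᶠ n in atTop, f^[n] x ∈ A) ∨ ∃ n, f^[n] x ∈ B) → ∃ n, f^[n] x ∈ C := by
  let I : Set X := limsup (fun n ↦ f^[n] ⁻¹' A) atTop
  have hI : MeasurableSet I := .measurableSet_limsup fun n ↦ hf.iterate n hA
  have hI_inv : f ⁻¹' I = I := by
    simp only [I, preimage_iterate_eq]
    exact CompleteLatticeHom.apply_limsup_iterate (CompleteLatticeHom.setPreimage f) A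
  have hI_iterate (n : ℕ) (x : X) : f^[n] x ∈ I ↔ x ∈ I :=
    Set.ext_iff.1 (IsFixedPt.preimage_iterate hI_inv n) x
  have mem_I (x : X) : x ∈ I ↔ ∃ᶠ n in atTop, f^[n] x ∈ A := mem_limsup_iff_frequently_mem
  refine ⟨I.ite A B, hI.ite hA hB, hA_ind.ite hB_ind hI_inv, fun x hx ↦ ?_⟩
  by_cases hxI : x ∈ I
  · obtain ⟨n, hn⟩ := ((mem_I x).1 hxI).exists
    exact ⟨n, .inl ⟨hn, (hI_iterate n x).2 hxI⟩⟩
  · obtain ⟨n, hn⟩ := hx.resolve_left (mt (mem_I x).2 hxI)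
    exact ⟨n, .inr ⟨hn, mt (hI_iterate n x).1 hxI⟩⟩

lemma exists_measurable_nat_ne_apply [MeasurableSpace.CountablySeparated X] (hf : Measurable f) :
    ∃ k : X → ℕ, Measurable k ∧ ∀ x, ¬IsFixedPt f x → k (f x) ≠ k x := by
  classical
  obtain ⟨g, hg, hg_inj⟩ := MeasurableSpace.measurable_injection_nat_bool_of_countablySeparated X
  have hg_apply (n : ℕ) : Measurable fun x ↦ g x n := (measurable_pi_apply n).comp hg
  let p (x : X) (n : ℕ) : Prop := g (f x) = g x ∨ g (f x) n ≠ g x n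
  have hp_meas (n : ℕ) : MeasurableSet {x | p x n} :=
    (measurableSet_eq_fun (hg.comp hf) hg).union
      (measurableSet_eq_fun ((hg_apply n).comp hf) (hg_apply n)).compl
  have hp (x : X) : ∃ n, p x n := by
    by_cases h : g (f x) = g x
    · exact ⟨0, .inl h⟩
    · exact (ne_iff.1 h).imp fun _ ↦ .inr
  -- The color of `x` is the first bit of `g` separating `x` from `f x`, with its value at `x`;
  -- were `f x` colored alike, that bit would not separate them.
  let N (x : X) : ℕ := Nat.find (hp x)
  have hN : Measurable N := measurable_find hp hp_meas
  have hbit : Measurable fun x ↦ g x (N x) :=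
    (measurable_from_prod_countable_left (f := fun q : X × ℕ ↦ g q.1 q.2) hg_apply).comp
      (measurable_id.prodMk hN)
  refine ⟨fun x ↦ Encodable.encode (N x, g x (N x)),
    (Measurable.of_discrete (f := Encodable.encode)).comp (hN.prodMk hbit), fun x hx h ↦ ?_⟩
  obtain ⟨hN_eq, hbit_eq⟩ := Prod.ext_iff.1 (Encodable.encode_injective h)
  dsimp only at hN_eq hbit_eq
  rw [hN_eq] at hbit_eq
  rcases Nat.find_spec (hp x) with heq | hne
  · exact hx (hg_inj heq)
  · exact hne hbit_eq

end Independence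

section BackwardOrbits

variable {X : Type*} {f : X → X}

lemma apply_mem_image_iterate_succ_iff {V : Set X} (hmaps : MapsTo f V V) (hinj : InjOn f V)
    {x : X} (hx : x ∈ V) (n : ℕ) : f x ∈ f^[n + 1] '' V ↔ x ∈ f^[n] '' V := by
  rw [iterate_succ', image_comp]
  exact hinj.mem_image_iff (hmaps.iterate n).image_subset hx

lemma exists_notMem_image_iterate {V : Set X} (hmaps : MapsTo f V V) {k : X → ℕ}
    (hk : ∀ x ∈ V, k x < k (f x)) (x : X) : ∃ n, x ∉ f^[n] '' V := by
  have hgrowth (n : ℕ) : ∀ y ∈ V, n ≤ k (f^[n] y) := by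
    induction n with
    | zero => exact fun y _ ↦ Nat.zero_le _
    | succ n ih =>
      intro y hy
      rw [iterate_succ_apply']
      exact (ih y hy).trans_lt (hk _ (hmaps.iterate n hy))
  refine ⟨k x + 1, ?_⟩
  rintro ⟨y, hy, hyx⟩
  have hle := hgrowth (k x + 1) y hy
  rw [hyx] at hle
  lia

variable [MeasurableSpace X] [StandardBorelSpace X]

lemma exists_measurable_nat_apply_eq_add_one (hf : Measurable f) {V : Set X}
    (hV : MeasurableSet V) (hmaps : MapsTo f V V) (hinj : InjOn f V)
    (hback : ∀ x, ∃ n, x ∉ f^[n] '' V) :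
    ∃ h : X → ℕ, Measurable h ∧ ∀ x ∈ V, h (f x) = h x + 1 := by
  classical
  have himage (n : ℕ) : MeasurableSet (f^[n] '' V) :=
    hV.image_of_measurable_injOn (hf.iterate n) (hinj.iterate hmaps n)
  refine ⟨fun x ↦ Nat.find (hback x), measurable_find hback fun n ↦ (himage n).compl,
    fun x hx ↦ ?_⟩
  have hiff (n : ℕ) := not_congr (apply_mem_image_iterate_succ_iff hmaps hinj hx n)
  have hzero : ¬f x ∉ f^[0] '' V := by simpa using hmaps hx
  have hshift : ∃ n, f x ∉ f^[n + 1] '' V := (hback x).imp fun n ↦ (hiff n).2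
  calc
    Nat.find (hback (f x)) = Nat.find hshift + 1 := Nat.find_comp_succ _ _ hzero
    _ = Nat.find (hback x) + 1 := congrArg (· + 1) (Nat.find_congr' (hiff _))

lemma exists_independentUnder_of_eventually_mem (hf : Measurable f) {W : Set X}
    (hW : MeasurableSet W) (hinj : InjOn f W) {k : X → ℕ} (hk : ∀ x ∈ W, k x < k (f x)) :
    ∃ E, MeasurableSet E ∧ IndependentUnder f E ∧
      ∀ x, (∀ᶠ n in atTop, f^[n] x ∈ W) → ∃ n, f^[n] x ∈ E := by
  let V : Set X := ⋂ n, f^[n] ⁻¹' W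
  have mem_V {x : X} : x ∈ V ↔ ∀ n, f^[n] x ∈ W := mem_iInter
  have hV : MeasurableSet V := .iInter fun n ↦ hf.iterate n hW
  have hVW : V ⊆ W := fun x hx ↦ mem_V.1 hx 0
  have hmaps : MapsTo f V V := fun x hx ↦ mem_V.2 fun n ↦ mem_V.1 hx (n + 1)
  obtain ⟨h, hh, hh_succ⟩ := exists_measurable_nat_apply_eq_add_one hf hV hmaps (hinj.mono hVW)
    (exists_notMem_image_iterate hmaps fun x hx ↦ hk x (hVW hx))
  refine ⟨V ∩ h ⁻¹' {n | Even n}, hV.inter (hh .of_discrete), ?_, fun x hx ↦ ?_⟩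
  · rintro x ⟨hxV, hx_even : Even (h x)⟩ ⟨-, hfx_even : Even (h (f x))⟩
    rw [hh_succ x hxV] at hfx_even
    exact Nat.even_add_one.1 hfx_even hx_even
  · obtain ⟨N, hN⟩ := eventually_atTop.1 hx
    have hN_mem : f^[N] x ∈ V := mem_V.2 fun n ↦ by
      rw [← iterate_add_apply]
      exact hN _ (by lia)
    by_cases heven : Even (h (f^[N] x))
    · exact ⟨N, hN_mem, heven⟩
    · refine ⟨N + 1, ?_⟩
      rw [iterate_succ_apply']
      exact ⟨hmaps hN_mem, by simpa [hh_succ _ hN_mem] using Nat.even_add_one.2 heven⟩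

lemma exists_independentUnder_of_injective_prodMk {α : Type*} [Finite α] [MeasurableSpace α]
    [MeasurableSingletonClass α] (hf : Measurable f) {l : X → α} (hl : Measurable l)
    (hfl : Injective fun x ↦ (f x, l x)) :
    ∃ C, MeasurableSet C ∧ IndependentUnder f C ∧
      ∀ x, (∀ n, ¬IsFixedPt f (f^[n] x)) → ∃ n, f^[n] x ∈ C := by
  let _ : LinearOrder α := .lift' (Finite.equivFin α) (Finite.equivFin α).injective
  obtain ⟨k, hk, hk_ne⟩ := exists_measurable_nat_ne_apply hf
  let W : Set X := {x | k x < k (f x) ∧ l (f x) = l x}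
  have hW : MeasurableSet W :=
    (measurableSet_lt hk (hk.comp hf)).inter (measurableSet_eq_fun (hl.comp hf) hl)
  have hW_inj : InjOn f W := fun x hx y hy hxy ↦
    hfl (Prod.ext hxy (hx.2.symm.trans ((congrArg l hxy).trans hy.2)))
  obtain ⟨E, hE, hE_ind, hE_mem⟩ :=
    exists_independentUnder_of_eventually_mem hf hW hW_inj fun x hx ↦ hx.1
  obtain ⟨B, hB, hB_ind, hB_mem⟩ := IndependentUnder.exists_amalgam hf
    (measurableSet_descentEnds hf hl) hE (independentUnder_descentEnds f l) hE_ind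
  obtain ⟨C, hC, hC_ind, hC_mem⟩ := IndependentUnder.exists_amalgam hf
    (measurableSet_descentEnds hf hk) hB (independentUnder_descentEnds f k) hB_ind
  refine ⟨C, hC, hC_ind, fun x hx ↦ hC_mem x ?_⟩
  refine (frequently_mem_descentEnds_or_eventually_le f k x).imp_right fun hk_le ↦ hB_mem x ?_
  refine (frequently_mem_descentEnds_or_eventually_le f l x).imp_right fun hl_le ↦ hE_mem x ?_
  filter_upwards [hk_le, eventually_eq_succ_of_eventually_le_succ hl_le] with n hkn hln
  rw [iterate_succ_apply'] at hkn hln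
  exact ⟨hkn.lt_of_ne (hk_ne _ (hx n)).symm, hln⟩

end BackwardOrbits

section ArcColoring

variable {X : Type*} {f : X → X}

/-- A proper edge coloring of the graph generated by `f`, where `c x` is the color of the arc
`(x, f x)`. The two arcs of a 2-cycle form one edge. A fixed point carries no edge, but is also
required to differ in color from the other points of its fibre. -/
structure IsArcColoring {α : Type*} (f : X → X) (c : X → α) : Prop where
  apply_eq_iff : ∀ x, c (f x) = c x ↔ IsPeriodicPt f 2 x
  injective_prodMk : Injective fun x ↦ (f x, c x)

open Classical in
/-- The coloring of the edges of the graph generated by `f` induced by a coloring `c` of the arcs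
`(x, f x)` by their sources; its values off the edges are irrelevant. -/
noncomputable def edgeColor {α : Type*} (f : X → X) (c : X → α) (p : X × X) : α :=
  if f p.1 = p.2 then c p.1 else c p.2

lemma measurable_edgeColor {α : Type*} [MeasurableSpace X] [MeasurableEq X] [MeasurableSpace α]
    (hf : Measurable f) {c : X → α} (hc : Measurable c) : Measurable (edgeColor f c) :=
  .ite (measurableSet_eq_fun (hf.comp measurable_fst) measurable_snd) (hc.comp measurable_fst)
    (hc.comp measurable_snd)

lemma IsArcColoring.edgeColor_comm {α : Type*} {c : X → α} (hc : IsArcColoring f c) {x y : X}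
    (h : f x = y ∨ f y = x) : edgeColor f c (x, y) = edgeColor f c (y, x) := by
  wlog hxy : f x = y generalizing x y
  · exact (this h.symm (h.resolve_left hxy)).symm
  subst hxy
  by_cases hx : f (f x) = x
  · simp [edgeColor, hx, (hc.apply_eq_iff x).2 hx]
  · simp [edgeColor, hx]

lemma IsArcColoring.edgeColor_ne {α : Type*} {c : X → α} (hc : IsArcColoring f c) {x y z : X}
    (hyz : y ≠ z) (hxy : f x = y ∨ f y = x) (hxz : f x = z ∨ f z = x) :
    edgeColor f c (x, y) ≠ edgeColor f c (x, z) := by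
  by_cases hy : f x = y
  · have hz : f x ≠ z := hy ▸ hyz
    obtain rfl := hxz.resolve_left hz
    simpa [edgeColor, hy, hyz] using mt (hc.apply_eq_iff z).1 hz
  · obtain rfl := hxy.resolve_left hy
    by_cases hz : f (f y) = z
    · simpa [edgeColor, hz, hyz.symm, eq_comm] using mt (hc.apply_eq_iff y).1 hy
    · have hzy : f z = f y := hxz.resolve_left hz
      have hne : c y ≠ c z := fun h ↦ hyz (hc.injective_prodMk (Prod.ext hzy.symm h))
      simpa [edgeColor, hy, hz] using hne

/-- The color of an arc whose source is labeled `b` and whose target is left by an arc of color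
`a`. It lies in `{2, 3}` if `b = false` and in `{1, 3}` if `b = true`. -/
def enteringColor (a : Fin 4) : Bool → Fin 4
  | false => if a = 2 then 3 else 2
  | true => if a = 1 then 3 else 1

/-- The color, in the complement of the possible values of `enteringColor · b'`, of an arc whose
source is labeled `b` and whose target is labeled `b'`. -/
def restartColor : Bool → Bool → Fin 4
  | false, _ => 0
  | true, false => 1
  | true, true => 2

lemma enteringColor_ne (a : Fin 4) (b : Bool) : enteringColor a b ≠ a := by
  revert a b; decide

lemma enteringColor_injective (a : Fin 4) : Injective (enteringColor a) := by
  revert a; unfold Injective; decide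

lemma enteringColor_ne_restartColor (a : Fin 4) (b b' : Bool) :
    enteringColor a b' ≠ restartColor b b' := by
  revert a b b'; decide

lemma restartColor_left_injective (b' : Bool) : Injective (restartColor · b') := by
  revert b'; unfold Injective; decide

lemma eq_or_eq_or_eq_of_injective_prodMk {Y : Type*} {f : X → Y} {l : X → Bool}
    (hfl : Injective fun x ↦ (f x, l x)) {x y z : X} (hxy : f x = f y) (hyz : f y = f z) :
    x = y ∨ y = z ∨ x = z := by
  have hl : l x = l y ∨ l y = l z ∨ l x = l z := by
    cases l x <;> cases l y <;> cases l z <;> simp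
  exact hl.imp (fun h ↦ hfl (Prod.ext hxy h)) (Or.imp (fun h ↦ hfl (Prod.ext hyz h))
    fun h ↦ hfl (Prod.ext (hxy.trans hyz) h))

lemma eq_of_isPeriodicPt_two_iff {l : X → Bool} (hfl : Injective fun x ↦ (f x, l x)) {x y : X}
    (hxy : f x = f y) (hfx : IsPeriodicPt f 2 (f x))
    (hper : IsPeriodicPt f 2 x ↔ IsPeriodicPt f 2 y) : x = y := by
  by_cases hx : IsPeriodicPt f 2 x
  · calc
      x = f (f x) := hx.symm
      _ = f (f y) := by rw [hxy]
      _ = y := hper.1 hx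
  · have hy : f (f y) ≠ y := mt hper.2 hx
    -- The fibre over `f x` also contains the periodic point `f (f x)`.
    rcases eq_or_eq_or_eq_of_injective_prodMk hfl hxy (hxy.symm.trans hfx.symm) with h | h | h
    · exact h
    · exact (hy (by rw [← hxy]; exact h.symm)).elim
    · exact (hx h.symm).elim

lemma isArcColoring_of_recursion {l : X → Bool} (hfl : Injective fun x ↦ (f x, l x)) {S : Set X}
    (hS : IndependentUnder f S) (hS_per : ∀ x ∈ S, ¬IsPeriodicPt f 2 (f x)) {c : X → Fin 4}
    (hc_per : ∀ x, IsPeriodicPt f 2 x → c x = 0)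
    (hc_pre : ∀ x, ¬IsPeriodicPt f 2 x → IsPeriodicPt f 2 (f x) → c x = 1)
    (hc_restart : ∀ x, f x ∈ S → c x = restartColor (l x) (l (f x)))
    (hc_step : ∀ x, ¬IsPeriodicPt f 2 (f x) → f x ∉ S → c x = enteringColor (c (f x)) (l x)) :
    IsArcColoring f c := by
  refine ⟨fun x ↦ ⟨fun hcx ↦ ?_, fun hx ↦ ?_⟩, fun x y hxy ↦ ?_⟩
  · by_contra hx
    by_cases hfx : IsPeriodicPt f 2 (f x)
    · rw [hc_per _ hfx, hc_pre x hx hfx] at hcx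
      exact absurd hcx (by decide)
    by_cases hfxS : f x ∈ S
    · rw [hc_step (f x) (hS_per _ hfxS) (hS _ hfxS), hc_restart x hfxS] at hcx
      exact enteringColor_ne_restartColor _ _ _ hcx
    · exact enteringColor_ne _ _ ((hc_step x hfx hfxS).symm.trans hcx.symm)
  · rw [hc_per x hx, hc_per (f x) (congrArg f hx)]
  · obtain ⟨hfxy, hcxy⟩ : f x = f y ∧ c x = c y := Prod.ext_iff.1 hxy
    by_cases hfx : IsPeriodicPt f 2 (f x)
    · have hper_iff {z : X} (hfz : IsPeriodicPt f 2 (f z)) : IsPeriodicPt f 2 z ↔ c z = 0 := by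
        refine ⟨hc_per z, fun hcz ↦ by_contra fun hz ↦ ?_⟩
        exact absurd (hcz.symm.trans (hc_pre z hz hfz)) (by decide)
      refine eq_of_isPeriodicPt_two_iff hfl hfxy hfx ?_
      rw [hper_iff hfx, hper_iff (hfxy ▸ hfx), hcxy]
    · refine hfl (Prod.ext hfxy ?_)
      by_cases hfxS : f x ∈ S
      · rw [hc_restart x hfxS, hc_restart y (hfxy ▸ hfxS), ← hfxy] at hcxy
        exact restartColor_left_injective _ hcxy
      · rw [hc_step x hfx hfxS, hc_step y (hfxy ▸ hfx) (hfxy ▸ hfxS), ← hfxy] at hcxy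
        exact enteringColor_injective _ hcxy

end ArcColoring

section BorelArcColoring

variable {X : Type*} [MeasurableSpace X] {f : X → X}

lemma exists_measurable_forward_recursion {α : Type*} [MeasurableSpace α] (hf : Measurable f)
    {R : Set X} (hR : MeasurableSet R) (hR_mem : ∀ x, ∃ n, f^[n] x ∈ R) {r : X → α}
    (hr : Measurable r) {F : X × α → α} (hF : Measurable F) :
    ∃ c : X → α, Measurable c ∧ (∀ x ∈ R, c x = r x) ∧ ∀ x ∉ R, c x = F (x, c (f x)) := by
  classical
  let a (n : ℕ) : X → α := n.rec r fun _ b x ↦ F (x, b (f x))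
  have ha (n : ℕ) : Measurable (a n) := by
    induction n with
    | zero => exact hr
    | succ n ih => exact hF.comp (measurable_id.prodMk (ih.comp hf))
  let N (x : X) : ℕ := Nat.find (hR_mem x)
  have hN : Measurable N := measurable_find hR_mem fun n ↦ hf.iterate n hR
  refine ⟨fun x ↦ a (N x) x,
    (measurable_from_prod_countable_left (f := fun q : X × ℕ ↦ a q.2 q.1) ha).comp
      (measurable_id.prodMk hN), fun x hx ↦ ?_, fun x hx ↦ ?_⟩
  · have hN_zero : N x = 0 := (Nat.find_eq_zero _).2 hx
    simp only [hN_zero]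
    rfl
  · have hN_succ : N x = N (f x) + 1 := Nat.find_comp_succ (hR_mem x) (hR_mem (f x)) hx
    simp only [hN_succ]
    rfl

variable [StandardBorelSpace X]

lemma exists_measurableSet_restart {α : Type*} [Finite α] [MeasurableSpace α]
    [MeasurableSingletonClass α] (hf : Measurable f) {l : X → α} (hl : Measurable l)
    (hfl : Injective fun x ↦ (f x, l x)) :
    ∃ S, MeasurableSet S ∧ IndependentUnder f S ∧ (∀ x ∈ S, ¬IsPeriodicPt f 2 (f x)) ∧
      ∀ x, ∃ n, IsPeriodicPt f 2 (f^[n] x) ∨ f^[n] x ∈ S := by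
  obtain ⟨C, hC, hC_ind, hC_mem⟩ := exists_independentUnder_of_injective_prodMk hf hl hfl
  have hper : MeasurableSet {x | IsPeriodicPt f 2 x} :=
    measurableSet_eq_fun (hf.iterate 2) measurable_id
  refine ⟨C ∩ {x | ¬IsPeriodicPt f 2 (f x)}, hC.inter (hf hper).compl,
    hC_ind.mono inter_subset_left, fun x hx ↦ hx.2, fun x ↦ ?_⟩
  by_cases hx : ∃ n, IsPeriodicPt f 2 (f^[n] x)
  · exact hx.imp fun _ ↦ .inl
  · push Not at hx
    obtain ⟨n, hn⟩ := hC_mem x fun n hfix ↦ hx n (hfix.isPeriodicPt 2)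
    refine ⟨n, .inr ⟨hn, ?_⟩⟩
    have hsucc := hx (n + 1)
    rwa [iterate_succ_apply'] at hsucc

lemma exists_measurable_isArcColoring (hf : Measurable f) {l : X → Bool} (hl : Measurable l)
    (hfl : Injective fun x ↦ (f x, l x)) :
    ∃ c : X → Fin 4, Measurable c ∧ IsArcColoring f c := by
  classical
  obtain ⟨S, hS, hS_ind, hS_per, hS_mem⟩ := exists_measurableSet_restart hf hl hfl
  let P : Set X := {x | IsPeriodicPt f 2 x}
  have hP : MeasurableSet P := measurableSet_eq_fun (hf.iterate 2) measurable_id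
  have hP_maps {x : X} (hx : x ∈ P) : f x ∈ P := congrArg f hx
  let R : Set X := f ⁻¹' (P ∪ S)
  have hR_mem (x : X) : ∃ n, f^[n] x ∈ R := (hS_mem (f x)).imp fun n hn ↦ by
    rwa [← iterate_succ_apply, iterate_succ_apply'] at hn
  let r (x : X) : Fin 4 :=
    if x ∈ P then 0 else if f x ∈ P then 1 else restartColor (l x) (l (f x))
  have hr : Measurable r := .ite hP measurable_const <| .ite (hf hP) measurable_const <|
    (Measurable.of_discrete (f := uncurry restartColor)).comp (hl.prodMk (hl.comp hf))
  have hF : Measurable fun q : X × Fin 4 ↦ enteringColor q.2 (l q.1) :=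
    (Measurable.of_discrete (f := uncurry enteringColor)).comp
      (measurable_snd.prodMk (hl.comp measurable_fst))
  obtain ⟨c, hc, hcR, hc_step⟩ :=
    exists_measurable_forward_recursion hf (hf (hP.union hS)) hR_mem hr hF
  refine ⟨c, hc, isArcColoring_of_recursion hfl hS_ind hS_per (fun x hx ↦ ?_) (fun x hx hfx ↦ ?_)
    (fun x hfx ↦ ?_) fun x hfx hfxS ↦ hc_step x (not_or.2 ⟨hfx, hfxS⟩)⟩
  · rw [hcR x (.inl (hP_maps hx))]
    exact if_pos hx
  · rw [hcR x (.inl hfx)]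
    exact (if_neg hx).trans (if_pos hfx)
  · have hfxP : f x ∉ P := fun h ↦ hS_per _ hfx (hP_maps h)
    rw [hcR x (.inr hfx)]
    exact (if_neg (mt hP_maps hfxP)).trans (if_neg hfxP)

end BorelArcColoring

/-- **Proposition.** Let `X` be a standard Borel space and `f : X → X` a 2-to-1 Borel
function. Then the underlying graph of the directed graph `D_f` generated by `f` admits
a Borel proper edge coloring with `4` colors: there is a Borel assignment of colors to
(ordered) edges which is symmetric on edges and gives distinct colors to distinct edges
sharing a vertex. -/
theorem borel_edge_coloring_of_two_to_one {X : Type*} [MeasurableSpace X]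
    [StandardBorelSpace X] (f : X → X) (hf : Measurable f)
    (h2to1 : ∀ y : X, ∃ a b : X, ∀ x : X, f x = y → x = a ∨ x = b) :
    ∃ c : X × X → Fin 4, Measurable c ∧
      (∀ x y : X, x ≠ y → (f x = y ∨ f y = x) → c (x, y) = c (y, x)) ∧
      (∀ x y z : X, y ≠ z →
        (x ≠ y ∧ (f x = y ∨ f y = x)) → (x ≠ z ∧ (f x = z ∨ f z = x)) →
        c (x, y) ≠ c (x, z)) := by
  obtain ⟨l, hl, hfl⟩ := IsTwoToOne.exists_measurable_bool_injective_prodMk h2to1 hf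
  obtain ⟨c, hc, hc_arc⟩ := exists_measurable_isArcColoring hf hl hfl
  exact ⟨edgeColor f c, measurable_edgeColor hf hc, fun _ _ _ hxy ↦ hc_arc.edgeColor_comm hxy,
    fun _ _ _ hyz hxy hxz ↦ hc_arc.edgeColor_ne hyz hxy.2 hxz.2⟩
end

section
/- Consider the Bernoulli shift action of ℤⁿ on {0,1}^(ℤⁿ) given by (g·x)(h) = x(h+g), let F(2^(ℤⁿ)) be its free part, and let μ be the product of the uniform (1/2, 1/2) measure. Let D be the directed Schreier graph on F(2^(ℤⁿ)) with respect to the standard generators e_1, …, e_n of ℤⁿ, i.e., with an arc from x to e_i·x for each i. Then D has no μ-measurable kernel: there is no μ-measurable set A ⊆ F(2^(ℤⁿ)) that is independent in the underlying graph of D and such that every x ∉ A has an out-neighbor in A. -/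
open MeasureTheory

/-- The Bernoulli shift action of `ℤⁿ` on `{0,1}^(ℤⁿ)`: `(g · x)(h) = x(h + g)`. -/
def bernoulliShift (n : ℕ) (g : Fin n → ℤ) (x : (Fin n → ℤ) → Bool) :
    (Fin n → ℤ) → Bool :=
  fun h => x (h + g)

/-- The free part `F(2^(ℤⁿ))` of the Bernoulli shift action of `ℤⁿ`. -/
def bernoulliFreePart (n : ℕ) : Set ((Fin n → ℤ) → Bool) :=
  {x | ∀ g : Fin n → ℤ, g ≠ 0 → bernoulliShift n g x ≠ x}

/-!
Membership in a kernel `A` is given by a local rule: it is determined at a site of the lattice by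
its values at the `n` forward neighbours of that site. The pattern of a local rule on the simplex
`{v ∈ ℕⁿ : ∑ vᵢ ≤ M}` is therefore determined by its values on the face `∑ vᵢ = M`, so at most
`2 ^ O(M ^ (n - 1))` patterns occur. On the other hand `A` is approximated in measure by an event
`B` depending on finitely many coordinates, and `B` is seen independently from `k ^ n` sites spread
out over a simplex with `M = O(k)`. If `A` is neither null nor conull, then neither is `B`, so each
single pattern is at Hamming distance at least `c * k ^ n` from that of `B` except with
exponentially small probability (Chernoff), while the pattern of `A` is close to that of `B` on
average; hence exponentially many (in `k ^ n`) patterns of `A` are needed. For large `k` the two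
counts conflict, so `A` is null or conull, and no such set is a kernel.
-/

open Filter Finset ProbabilityTheory
open SymbolicDynamics.FullShift (shift shift_add shift_apply)

section LocalRule

variable {ι K : Type*} [DecidableEq ι]

/-- The labelling `a` of the orthant `ℕ^ι` obeys the local rule `f`: the label of each site is
`f` of the labels of its forward neighbours `v + eᵢ`. -/
def ObeysRule (f : (ι → K) → K) (a : (ι → ℕ) → K) : Prop :=
  ∀ v, a v = f fun i => a (v + Pi.single i 1)

variable [Fintype ι] {f : (ι → K) → K} {a a' : (ι → ℕ) → K}

lemma ObeysRule.eq_of_eq_on_level (ha : ObeysRule f a) (ha' : ObeysRule f a') {M : ℕ}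
    (h : ∀ v, ∑ i, v i = M → a v = a' v) {v : ι → ℕ} (hv : ∑ i, v i ≤ M) : a v = a' v := by
  obtain ⟨d, hd⟩ := Nat.exists_eq_add_of_le' hv
  induction d generalizing v with
  | zero => exact h v (by omega)
  | succ d ih =>
    have hstep (i : ι) : ∑ j, (v + Pi.single i 1 : ι → ℕ) j = ∑ j, v j + 1 := by
      simp [sum_add_distrib]
    rw [ha, ha']
    congr 1 with i
    exact ih (by rw [hstep]; omega) (by rw [hstep]; omega)

lemma exists_patterns_card_le [Fintype K] (f : (ι → K) → K) {M : ℕ} {U : Type*}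
    {site : U → ι → ℕ} (hsite : ∀ u, ∑ i, site u i ≤ M) :
    ∃ P : Finset (U → K), #P ≤ Fintype.card K ^ #(piAntidiag (univ : Finset ι) M) ∧
      ∀ a, ObeysRule f a → (fun u => a (site u)) ∈ P := by
  classical
  by_cases hex : ∃ a, ObeysRule f a
  · obtain ⟨a₀, -⟩ := hex
    have : Nonempty (U → K) := ⟨fun u => a₀ (site u)⟩
    have hfactors : (fun (a : {a // ObeysRule f a}) u => a.1 (site u)).FactorsThrough
        fun a (w : piAntidiag (univ : Finset ι) M) => a.1 w := fun a a' h => funext fun u =>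
      a.2.eq_of_eq_on_level a'.2 (fun v hv => congrFun h ⟨v, by simp [hv]⟩) (hsite u)
    obtain ⟨decode, hdecode⟩ := (Function.factorsThrough_iff _).1 hfactors
    refine ⟨univ.image decode, card_image_le.trans_eq (by simp), fun a ha => ?_⟩
    exact mem_image.2 ⟨_, mem_univ _, (congrFun hdecode ⟨a, ha⟩).symm⟩
  · exact ⟨∅, by simp, fun a ha => (hex ⟨a, ha⟩).elim⟩

end LocalRule

section Lattice

variable {ι : Type*}

lemma card_piAntidiag_univ [Fintype ι] [DecidableEq ι] (M : ℕ) :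
    #(piAntidiag (univ : Finset ι) M) = (Fintype.card ι + M - 1).choose M := by
  rw [← map_sym_eq_piAntidiag, card_map, sym_univ, card_univ, Sym.card_sym_eq_choose]

lemma card_piAntidiag_univ_le [Fintype ι] [DecidableEq ι] [Nonempty ι] (M : ℕ) :
    #(piAntidiag (univ : Finset ι) M) ≤ (Fintype.card ι + M) ^ (Fintype.card ι - 1) := by
  have hpos : 0 < Fintype.card ι := Fintype.card_pos
  rw [card_piAntidiag_univ, ← Nat.choose_symm (by omega),
    show Fintype.card ι + M - 1 - M = Fintype.card ι - 1 by omega]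
  exact (Nat.choose_le_pow _ _).trans (Nat.pow_le_pow_left (Nat.sub_le _ _) _)

lemma exists_card_piAntidiag_lt [Fintype ι] [DecidableEq ι] [Nonempty ι] (t : ℕ) {δ : ℝ}
    (hδ : 0 < δ) :
    ∃ k : ℕ, #(piAntidiag (univ : Finset ι) (t * k)) < δ * (k : ℝ) ^ Fintype.card ι := by
  set n := Fintype.card ι
  obtain ⟨k, hk⟩ := exists_nat_gt (((n + t : ℕ) : ℝ) ^ (n - 1) / δ)
  have hk0 : 0 < k :=
    Nat.cast_pos.1 (lt_of_le_of_lt (by positivity : (0 : ℝ) ≤ ((n + t : ℕ) : ℝ) ^ (n - 1) / δ) hk)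
  refine ⟨k, ?_⟩
  calc (#(piAntidiag (univ : Finset ι) (t * k)) : ℝ)
      ≤ (((n + t) * k : ℕ) : ℝ) ^ (n - 1) := by
        refine mod_cast (card_piAntidiag_univ_le _).trans (Nat.pow_le_pow_left ?_ _)
        nlinarith
    _ = ((n + t : ℕ) : ℝ) ^ (n - 1) * (k : ℝ) ^ (n - 1) := by rw [Nat.cast_mul, mul_pow]
    _ < δ * k * (k : ℝ) ^ (n - 1) := by
        gcongr
        rwa [← div_lt_iff₀' hδ]
    _ = δ * (k : ℝ) ^ n := by
        rw [mul_assoc, ← pow_succ', Nat.sub_add_cancel Fintype.card_pos]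

lemma exists_injective_smul_add [Finite ι] (I : Finset (ι → ℤ)) :
    ∃ s : ℕ, Function.Injective fun p : (ι → ℤ) × I => (s : ℤ) • p.1 + p.2 := by
  cases nonempty_fintype ι
  obtain ⟨R, hR⟩ : ∃ R : ℕ, ∀ j ∈ I, ∀ i, |j i| ≤ R := by
    obtain ⟨R, hR⟩ := (I.finite_toSet.image fun j => ∑ i, (j i).natAbs).bddAbove
    refine ⟨R, fun j hj i => ?_⟩
    rw [Int.abs_eq_natAbs]
    exact mod_cast (single_le_sum (f := fun i => (j i).natAbs) (fun _ _ => zero_le)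
      (mem_univ i)).trans (hR ⟨j, hj, rfl⟩)
  refine ⟨2 * R + 1, ?_⟩
  rintro ⟨w, j, hj⟩ ⟨w', j', hj'⟩ h
  have hjj' : j = j' := by
    funext i
    have hi : (2 * R + 1 : ℕ) * w i + j i = (2 * R + 1 : ℕ) * w' i + j' i := congrFun h i
    have hdvd : ((2 * R + 1 : ℕ) : ℤ) ∣ j i - j' i := ⟨w' i - w i, by linear_combination hi⟩
    have hlt : |j i - j' i| < (2 * R + 1 : ℕ) := by
      have := abs_sub (j i) (j' i)
      have := hR j hj i
      have := hR j' hj' i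
      push_cast
      linarith
    exact sub_eq_zero.1 (Int.eq_zero_of_abs_lt_dvd hdvd hlt)
  subst hjj'
  have hw : w = w' := by
    have hs : ((2 * R + 1 : ℕ) : ℤ) ≠ 0 := by positivity
    exact smul_right_injective _ hs (add_right_cancel h)
  rw [hw]

end Lattice

section Hamming

variable {Ω U K : Type*} [Fintype U] [DecidableEq K]

lemma cast_hammingDist_eq_sum_indicator (Y Z : U → Ω → K) (ω : Ω) :
    (hammingDist (Y · ω) (Z · ω) : ℝ) = ∑ u, {ω | Y u ω ≠ Z u ω}.indicator 1 ω := by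
  simp only [hammingDist, natCast_card_filter, Set.indicator_apply, Set.mem_ofPred_eq, Pi.one_apply]

variable [MeasurableSpace Ω] {μ : Measure Ω} [IsProbabilityMeasure μ]

lemma exp_mul_integral_le_mgf {X : Ω → ℝ} {t : ℝ} (hX : Integrable X μ)
    (hexp : Integrable (fun ω => Real.exp (t * X ω)) μ) :
    Real.exp (t * ∫ ω, X ω ∂μ) ≤ mgf X μ t := by
  rw [← integral_const_mul]
  exact convexOn_exp.map_integral_le Real.continuous_exp.continuousOn isClosed_univ
    (.of_forall fun _ => Set.mem_univ _) (hX.const_mul t) hexp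

lemma mgf_indicator_neg_one_le {C : Set Ω} (hC : MeasurableSet C) :
    mgf (C.indicator 1) μ (-1) ≤ Real.exp (-(μ.real C / 2)) := by
  have haffine (ω : Ω) : Real.exp (-1 * C.indicator 1 ω) =
      1 - C.indicator (fun _ => 1 - Real.exp (-1)) ω := by
    by_cases hω : ω ∈ C <;> simp [hω]
  calc mgf (C.indicator 1) μ (-1)
      = 1 - μ.real C * (1 - Real.exp (-1)) := by
        simp_rw [mgf, haffine]
        rw [integral_sub (integrable_const _) ((integrable_const _).indicator hC),
          integral_indicator_const _ hC]
        simp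
    _ ≤ 1 - μ.real C * (1 / 2) := by
        gcongr
        linarith [Real.exp_neg_one_lt_half]
    _ ≤ Real.exp (-(μ.real C / 2)) := by linarith [Real.add_one_le_exp (-(μ.real C / 2))]

lemma integrable_exp_neg_hammingDist {Y Z : U → Ω → K}
    (hYZ : ∀ u, NullMeasurableSet {ω | Y u ω ≠ Z u ω} μ) :
    Integrable (fun ω => Real.exp (-1 * hammingDist (Y · ω) (Z · ω))) μ := by
  refine .of_bound (C := 1) ?_ (.of_forall fun ω => ?_)
  · simp_rw [cast_hammingDist_eq_sum_indicator]
    have (u : U) := (aemeasurable_indicator_const_iff (1 : ℝ)).2 (hYZ u)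
    simp only [← Pi.one_def] at this
    fun_prop
  · rw [Real.norm_of_nonneg (Real.exp_pos _).le, Real.exp_le_one_iff]
    simp

lemma exp_neg_le_mgf_hammingDist {Y Z : U → Ω → K}
    (hYZ : ∀ u, NullMeasurableSet {ω | Y u ω ≠ Z u ω} μ) :
    Real.exp (-∑ u, μ.real {ω | Y u ω ≠ Z u ω}) ≤
      mgf (fun ω => (hammingDist (Y · ω) (Z · ω) : ℝ)) μ (-1) := by
  have hint (u : U) : Integrable ({ω | Y u ω ≠ Z u ω}.indicator (1 : Ω → ℝ)) μ :=
    (integrable_const (1 : ℝ)).indicator₀ (hYZ u)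
  have hmean : ∫ ω, (hammingDist (Y · ω) (Z · ω) : ℝ) ∂μ = ∑ u, μ.real {ω | Y u ω ≠ Z u ω} := by
    simp_rw [cast_hammingDist_eq_sum_indicator]
    rw [integral_finsetSum _ fun u _ => hint u]
    refine sum_congr rfl fun u _ => ?_
    rw [integral_indicator₀ (hYZ u)]
    simp
  rw [← hmean, ← neg_one_mul]
  refine exp_mul_integral_le_mgf ?_ (integrable_exp_neg_hammingDist hYZ)
  simp_rw [cast_hammingDist_eq_sum_indicator]
  exact integrable_finsetSum _ fun u _ => hint u

variable [MeasurableSpace K] [MeasurableSingletonClass K]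

lemma mgf_hammingDist_le {Y : U → Ω → K} (hY : ∀ u, Measurable (Y u)) (hindep : iIndepFun Y μ)
    (p : U → K) :
    mgf (fun ω => (hammingDist (Y · ω) p : ℝ)) μ (-1) ≤
      Real.exp (-((∑ u, μ.real {ω | Y u ω ≠ p u}) / 2)) := by
  have hmeas (u : U) : MeasurableSet {ω | Y u ω ≠ p u} :=
    (hY u (measurableSet_singleton (p u))).compl
  have hindicator : iIndepFun (fun u => {ω | Y u ω ≠ p u}.indicator (1 : Ω → ℝ)) μ :=
    hindep.comp (fun u => {k | k ≠ p u}.indicator (1 : K → ℝ)) fun u =>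
      measurable_one.indicator (measurableSet_singleton (p u)).compl
  calc mgf (fun ω => (hammingDist (Y · ω) p : ℝ)) μ (-1)
      = mgf (∑ u, {ω | Y u ω ≠ p u}.indicator 1) μ (-1) := by
        congr 1 with ω
        rw [Finset.sum_apply]
        exact cast_hammingDist_eq_sum_indicator Y (fun u _ => p u) ω
    _ = ∏ u, mgf ({ω | Y u ω ≠ p u}.indicator 1) μ (-1) :=
        hindicator.mgf_sum (fun u => measurable_one.indicator (hmeas u)) univ
    _ ≤ ∏ u, Real.exp (-(μ.real {ω | Y u ω ≠ p u} / 2)) :=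
        prod_le_prod (fun u _ => mgf_nonneg) fun u _ => mgf_indicator_neg_one_le (hmeas u)
    _ = Real.exp (-((∑ u, μ.real {ω | Y u ω ≠ p u}) / 2)) := by
        rw [← Real.exp_sum, sum_neg_distrib, sum_div]

end Hamming

lemma exp_mul_card_le_card_of_approx_iIndepFun {Ω U K : Type*} [Fintype U]
    [MeasurableSpace K] [MeasurableSingletonClass K] [MeasurableSpace Ω] {μ : Measure Ω}
    [IsProbabilityMeasure μ] {Y Z : U → Ω → K} (hY : ∀ u, Measurable (Y u))
    (hindep : iIndepFun Y μ) (hYZ : ∀ u, NullMeasurableSet {ω | Y u ω ≠ Z u ω} μ) {c ε : ℝ}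
    (hc : ∀ u k, c ≤ μ.real {ω | Y u ω ≠ k}) (hε : ∀ u, μ.real {ω | Y u ω ≠ Z u ω} ≤ ε)
    {P : Finset (U → K)} (hP : ∀ᵐ ω ∂μ, (Z · ω) ∈ P) :
    Real.exp ((c / 2 - ε) * Fintype.card U) ≤ #P := by
  classical
  have hint (p : U → K) :
      Integrable (fun ω => Real.exp (-1 * hammingDist (Y · ω) p)) μ :=
    integrable_exp_neg_hammingDist (Z := fun u _ => p u) fun u =>
      (hY u (measurableSet_singleton (p u))).compl.nullMeasurableSet
  have hbound : Real.exp (-(ε * Fintype.card U)) ≤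
      #P * Real.exp (-(c / 2 * Fintype.card U)) := calc
    Real.exp (-(ε * Fintype.card U)) ≤ Real.exp (-∑ u, μ.real {ω | Y u ω ≠ Z u ω}) := by
        gcongr
        simpa [mul_comm] using sum_le_sum fun u (_ : u ∈ univ) => hε u
    _ ≤ mgf (fun ω => (hammingDist (Y · ω) (Z · ω) : ℝ)) μ (-1) := exp_neg_le_mgf_hammingDist hYZ
    _ ≤ ∫ ω, ∑ p ∈ P, Real.exp (-1 * hammingDist (Y · ω) p) ∂μ := by
        refine integral_mono_ae (integrable_exp_neg_hammingDist hYZ)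
          (integrable_finsetSum _ fun p _ => hint p) ?_
        filter_upwards [hP] with ω hω
        exact single_le_sum (f := fun p => Real.exp (-1 * hammingDist (Y · ω) p))
          (fun _ _ => (Real.exp_pos _).le) hω
    _ = ∑ p ∈ P, mgf (fun ω => (hammingDist (Y · ω) p : ℝ)) μ (-1) :=
        integral_finsetSum _ fun p _ => hint p
    _ ≤ ∑ _p ∈ P, Real.exp (-(c / 2 * Fintype.card U)) := by
        refine sum_le_sum fun p _ => (mgf_hammingDist_le hY hindep p).trans ?_
        gcongr
        have := sum_le_sum fun u (_ : u ∈ univ) => hc u (p u)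
        simp only [sum_const, card_univ, nsmul_eq_mul] at this
        linarith
    _ = #P * Real.exp (-(c / 2 * Fintype.card U)) := by rw [sum_const, nsmul_eq_mul]
  calc Real.exp ((c / 2 - ε) * Fintype.card U)
      = Real.exp (-(ε * Fintype.card U)) * Real.exp (c / 2 * Fintype.card U) := by
        rw [← Real.exp_add]; ring_nf
    _ ≤ #P * Real.exp (-(c / 2 * Fintype.card U)) * Real.exp (c / 2 * Fintype.card U) := by gcongr
    _ = #P := by rw [mul_assoc, ← Real.exp_add]; simp

section ProductMeasure

variable {ι : Type*}

lemma eq_infinitePi_of_forall_cylinder_eq_prod {X : ι → Type*} [∀ i, MeasurableSpace (X i)]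
    [∀ i, Countable (X i)] [∀ i, MeasurableSingletonClass (X i)] {ν : ∀ i, Measure (X i)}
    [∀ i, IsProbabilityMeasure (ν i)] {μ : Measure (∀ i, X i)} [IsFiniteMeasure μ]
    (hμ : ∀ (s : Finset ι) (b : ∀ i, X i), μ {x | ∀ i ∈ s, x i = b i} = ∏ i ∈ s, ν i {b i}) :
    μ = Measure.infinitePi ν := by
  classical
  have (i : ι) : Nonempty (X i) := nonempty_of_isProbabilityMeasure (ν i)
  refine IsProjectiveLimit.unique (P := fun I : Finset ι => Measure.pi fun i : I => ν i)
    (fun I => Measure.ext_of_singleton fun b => ?_) (Measure.isProjectiveLimit_infinitePi ν)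
  obtain ⟨b, rfl⟩ := Subtype.exists_pi_extension b
  have hpre : I.restrict ⁻¹' {fun i : I => b i} = {x | ∀ i ∈ I, x i = b i} := by
    ext x
    simp [funext_iff]
  rw [Measure.map_apply (by fun_prop) (measurableSet_singleton _), Measure.pi_singleton, hpre, hμ]
  exact (prod_coe_sort I fun i => ν i {b i}).symm

/-- The Bernoulli measure `ν^G` on the full shift `X^G`: the law of an i.i.d. family of
`ν`-distributed symbols indexed by `G`. -/
noncomputable abbrev iidMeasure (G : Type*) {X : Type*} [MeasurableSpace X]
    (ν : Measure X) : Measure (G → X) :=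
  Measure.infinitePi fun _ => ν

variable {X : Type*} [MeasurableSpace X] (ν : Measure X) [IsProbabilityMeasure ν]

lemma measurePreserving_shift {G : Type*} [AddMonoid G] [IsLeftCancelAdd G] (g : G) :
    MeasurePreserving (shift g) (iidMeasure G ν) (iidMeasure G ν) := by
  refine ⟨measurable_pi_lambda _ fun h => measurable_pi_apply _, ?_⟩
  exact Measure.map_infinitePi_infinitePi_of_inj (add_right_injective g)

variable {ν}

lemma iIndepFun_blocks {U κ : Type*} {f : U × κ → ι} (hf : Function.Injective f) :
    iIndepFun (fun (u : U) (ω : ι → X) (j : κ) => ω (f (u, j))) (iidMeasure ι ν) := by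
  rw [iIndepFun_iff_map_fun_eq_infinitePi_map (fun u => by fun_prop)]
  have hu (u : U) : (iidMeasure ι ν).map (fun ω (j : κ) => ω (f (u, j))) =
      iidMeasure κ ν :=
    Measure.map_infinitePi_infinitePi_of_inj (P := fun _ : ι => ν) (f := fun j => f (u, j))
      (hf.comp (Prod.mk_right_injective u))
  simp_rw [hu]
  rw [← Measure.infinitePi_map_curry (fun (_ : U) (_ : κ) => ν),
    ← Measure.map_infinitePi_infinitePi_of_inj (P := fun _ : ι => ν) hf,
    Measure.map_map (by fun_prop) (by fun_prop)]
  rfl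

lemma exists_cylinder_symmDiff_lt {X : ι → Type*} [∀ i, MeasurableSpace (X i)]
    {μ : Measure (∀ i, X i)} [IsFiniteMeasure μ] {A : Set (∀ i, X i)}
    (hA : NullMeasurableSet A μ) {ε : ENNReal} (hε : 0 < ε) :
    ∃ (I : Finset ι) (S : Set (∀ i : I, X i)), MeasurableSet S ∧
      μ (symmDiff (cylinder I S) A) < ε := by
  obtain ⟨t, ht, hlt⟩ := exists_measure_symmDiff_lt_of_generateFrom_isSetRing (μ := μ)
    (C := measurableCylinders X) isSetAlgebra_measurableCylinders.isSetRing
    ⟨{Set.univ}, Set.countable_singleton _,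
      Set.singleton_subset_iff.2 (univ_mem_measurableCylinders X), by simp⟩
    generateFrom_measurableCylinders.symm (measurableSet_toMeasurable μ A) hε
  obtain ⟨I, S, hS, rfl⟩ := (mem_measurableCylinders t).1 ht
  refine ⟨I, S, hS, ?_⟩
  exact (measure_congr (ae_eq_set_symmDiff (ae_eq_refl (cylinder I S))
    hA.toMeasurable_ae_eq)).symm.trans_lt hlt

lemma iidMeasure_forall_mem_eq_zero {f : ℕ → ι} (hf : Function.Injective f) {s : Set X}
    (hs : MeasurableSet s) (hν : ν s < 1) :
    iidMeasure ι ν {x | ∀ k, x (f k) ∈ s} = 0 := by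
  classical
  have hle (m : ℕ) : iidMeasure ι ν {x | ∀ k, x (f k) ∈ s} ≤ ν s ^ m :=
    calc iidMeasure ι ν {x | ∀ k, x (f k) ∈ s}
        ≤ iidMeasure ι ν (((range m).image f : Set ι).pi fun _ => s) := by
          refine measure_mono fun x hx i hi => ?_
          obtain ⟨k, -, rfl⟩ := mem_image.1 (mem_coe.1 hi)
          exact hx k
      _ = ν s ^ m := by
          rw [Measure.infinitePi_pi _ fun _ _ => hs, prod_const, card_image_of_injective _ hf,
            card_range]
  exact le_antisymm (ge_of_tendsto' (ENNReal.tendsto_pow_atTop_nhds_zero_of_lt_one hν) hle) zero_le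

lemma ae_shift_ne_self {G : Type*} [AddLeftCancelMonoid G] [Countable X]
    [MeasurableSingletonClass X] (hν : ∀ b, ν {b} < 1) {g : G} (hg : ¬ IsOfFinAddOrder g) :
    ∀ᵐ x ∂iidMeasure G ν, shift g x ≠ x := by
  have hnull (b : X) := iidMeasure_forall_mem_eq_zero
    (injective_nsmul_iff_not_isOfFinAddOrder.2 hg) (measurableSet_singleton b) (hν b)
  filter_upwards [ae_all_iff.2 fun b => measure_eq_zero_iff_ae_notMem.1 (hnull b)] with x hx hfix
  refine hx (x 0) fun k => ?_
  induction k with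
  | zero => simp
  | succ k ih =>
    calc x ((k + 1) • g) = shift g x (k • g) := by rw [shift_apply, succ_nsmul']
      _ = x 0 := by rw [hfix, ih]

end ProductMeasure

lemma measureReal_le_add_measureReal_symmDiff {Ω : Type*} [MeasurableSpace Ω] {μ : Measure Ω}
    [IsFiniteMeasure μ] (s t : Set Ω) : μ.real t ≤ μ.real s + μ.real (symmDiff s t) := by
  simpa [← Set.bot_eq_empty] using measureReal_symmDiff_le (μ := μ) (s := ∅) (t := s) t

section Cylinder

variable {G U X : Type*} [MeasurableSpace X] {ν : Measure X} [IsProbabilityMeasure ν]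
  {I : Finset G} {site : U → G} {S : Set (I → X)}

lemma iIndepFun_shift_mem_cylinder [AddMonoid G]
    (hsite : Function.Injective fun p : U × I => site p.1 + p.2) (hS : MeasurableSet S) :
    iIndepFun (fun u x => shift (site u) x ∈ cylinder I S) (iidMeasure G ν) :=
  (iIndepFun_blocks hsite).comp (fun _ => (· ∈ S)) fun _ => measurableSet_setOfPred.1 hS

lemma exp_mul_card_le_card_of_approx_cylinder [AddMonoid G] [IsLeftCancelAdd G] [Fintype U]
    {A : Set (G → X)} (hA : NullMeasurableSet A (iidMeasure G ν)) (hS : MeasurableSet S) {c ε : ℝ}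
    (hc : c ≤ (iidMeasure G ν).real (cylinder I S))
    (hcompl : c ≤ (iidMeasure G ν).real (cylinder I S)ᶜ)
    (hε : (iidMeasure G ν).real (symmDiff (cylinder I S) A) ≤ ε)
    (hsite : Function.Injective fun p : U × I => site p.1 + p.2) {P : Finset (U → Prop)}
    (hP : ∀ᵐ x ∂iidMeasure G ν, (fun u => shift (site u) x ∈ A) ∈ P) :
    Real.exp ((c / 2 - ε) * Fintype.card U) ≤ #P := by
  set B : Set (G → X) := cylinder I S
  have hB : MeasurableSet B := hS.cylinder I
  have hBA : NullMeasurableSet (symmDiff B A) (iidMeasure G ν) := hB.nullMeasurableSet.symmDiff hA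
  have hshift (u : U) := measurePreserving_shift ν (site u)
  have hdiff (u : U) : {x | (shift (site u) x ∈ B) ≠ (shift (site u) x ∈ A)} =
      shift (site u) ⁻¹' symmDiff B A := by
    ext x
    simp only [Set.mem_ofPred_eq, Set.mem_preimage, Set.mem_symmDiff, ne_eq, eq_iff_iff]
    tauto
  refine exp_mul_card_le_card_of_approx_iIndepFun
    (fun u => measurableSet_setOfPred.1 ((hshift u).measurable hB))
    (iIndepFun_shift_mem_cylinder hsite hS) (fun u => ?_) (fun u q => ?_) (fun u => ?_) hP
  · exact hdiff u ▸ hBA.preimage (hshift u).quasiMeasurePreserving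
  · by_cases hq : q
    · rw [← (hshift u).measureReal_preimage hB.compl.nullMeasurableSet] at hcompl
      simpa [hq, Set.preimage, Set.compl_def] using hcompl
    · rw [← (hshift u).measureReal_preimage hB.nullMeasurableSet] at hc
      simpa [hq, Set.preimage] using hc
  · rwa [hdiff, (hshift u).measureReal_preimage hBA]

end Cylinder

section ZeroOneLaw

variable {ι X : Type*} [DecidableEq ι] [MeasurableSpace X] {ν : Measure X}
  [IsProbabilityMeasure ν] {A : Set ((ι → ℤ) → X)} {f : (ι → Prop) → Prop}

lemma ae_obeysRule [Finite ι]
    (hrule : ∀ᵐ x ∂iidMeasure (ι → ℤ) ν, x ∈ A ↔ f fun i => shift (Pi.single i 1) x ∈ A) :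
    ∀ᵐ x ∂iidMeasure (ι → ℤ) ν, ObeysRule f fun v => shift (fun i => (v i : ℤ)) x ∈ A := by
  refine ae_all_iff.2 fun v => ?_
  filter_upwards [(measurePreserving_shift ν _).quasiMeasurePreserving.ae hrule] with x hx
  rw [hx]
  congr! 3 with i
  rw [← shift_add]
  congr 1 with j
  simp [Pi.single_apply]

lemma mul_card_le_card_piAntidiag [Fintype ι] (hA : NullMeasurableSet A (iidMeasure (ι → ℤ) ν))
    (hrule : ∀ᵐ x ∂iidMeasure (ι → ℤ) ν, x ∈ A ↔ f fun i => shift (Pi.single i 1) x ∈ A)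
    {I : Finset (ι → ℤ)} {S : Set (I → X)} (hS : MeasurableSet S) {c ε : ℝ}
    (hc : c ≤ (iidMeasure (ι → ℤ) ν).real (cylinder I S))
    (hcompl : c ≤ (iidMeasure (ι → ℤ) ν).real (cylinder I S)ᶜ)
    (hε : (iidMeasure (ι → ℤ) ν).real (symmDiff (cylinder I S) A) ≤ ε)
    {U : Type*} [Fintype U] {site : U → ι → ℕ}
    (hinj : Function.Injective fun p : U × I => (fun i => (site p.1 i : ℤ)) + (p.2 : ι → ℤ))
    {M : ℕ} (hM : ∀ u, ∑ i, site u i ≤ M) :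
    (c / 2 - ε) * Fintype.card U ≤ #(piAntidiag (univ : Finset ι) M) := by
  obtain ⟨P, hPcard, hP⟩ := exists_patterns_card_le f hM
  rw [← Real.exp_le_exp]
  calc Real.exp ((c / 2 - ε) * Fintype.card U) ≤ #P :=
        exp_mul_card_le_card_of_approx_cylinder hA hS hc hcompl hε hinj
          ((ae_obeysRule hrule).mono fun x => hP _)
    _ ≤ 2 ^ #(piAntidiag (univ : Finset ι) M) := by
        rw [Fintype.card_prop] at hPcard
        exact_mod_cast hPcard
    _ ≤ Real.exp 1 ^ #(piAntidiag (univ : Finset ι) M) := by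
        gcongr
        linarith [Real.add_one_le_exp 1]
    _ = Real.exp #(piAntidiag (univ : Finset ι) M) := by rw [← Real.exp_nat_mul, mul_one]

lemma mul_pow_le_card_piAntidiag [Fintype ι] (hA : NullMeasurableSet A (iidMeasure (ι → ℤ) ν))
    (hrule : ∀ᵐ x ∂iidMeasure (ι → ℤ) ν, x ∈ A ↔ f fun i => shift (Pi.single i 1) x ∈ A)
    {I : Finset (ι → ℤ)} {S : Set (I → X)} (hS : MeasurableSet S) {c ε : ℝ}
    (hc : c ≤ (iidMeasure (ι → ℤ) ν).real (cylinder I S))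
    (hcompl : c ≤ (iidMeasure (ι → ℤ) ν).real (cylinder I S)ᶜ)
    (hε : (iidMeasure (ι → ℤ) ν).real (symmDiff (cylinder I S) A) ≤ ε) {s : ℕ}
    (hs : Function.Injective fun p : (ι → ℤ) × I => (s : ℤ) • p.1 + p.2) (k : ℕ) :
    (c / 2 - ε) * (k : ℝ) ^ Fintype.card ι ≤
      #(piAntidiag (univ : Finset ι) (Fintype.card ι * s * k)) := by
  have hinj : Function.Injective fun p : (ι → Fin k) × I =>
      (fun i => ((s * p.1 i : ℕ) : ℤ)) + (p.2 : ι → ℤ) := by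
    have hcast : Function.Injective fun (u : ι → Fin k) i => ((u i : ℕ) : ℤ) :=
      (Nat.cast_injective.comp Fin.val_injective).comp_left
    convert hs.comp (hcast.prodMap Function.injective_id) using 1
    ext p i
    simp
  have hM (u : ι → Fin k) : ∑ i, s * (u i : ℕ) ≤ Fintype.card ι * s * k := calc
    ∑ i, s * (u i : ℕ) ≤ ∑ _i : ι, s * k := by gcongr; exact (u _).is_lt.le
    _ = Fintype.card ι * s * k := by simp [mul_assoc]
  simpa using mul_card_le_card_piAntidiag hA hrule hS hc hcompl hε hinj hM

theorem eventuallyConst_of_localRule [Finite ι] [Nonempty ι]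
    (hA : NullMeasurableSet A (iidMeasure (ι → ℤ) ν))
    (hrule : ∀ᵐ x ∂iidMeasure (ι → ℤ) ν, x ∈ A ↔ f fun i => shift (Pi.single i 1) x ∈ A) :
    EventuallyConst A (ae (iidMeasure (ι → ℤ) ν)) := by
  cases nonempty_fintype ι
  by_contra hconst
  set μ := iidMeasure (ι → ℤ) ν
  obtain ⟨hnull, hconull⟩ : μ A ≠ 0 ∧ μ Aᶜ ≠ 0 := by
    rw [eventuallyConst_set, not_or] at hconst
    exact ⟨fun h => hconst.2 (measure_eq_zero_iff_ae_notMem.1 h), fun h => hconst.1 h⟩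
  obtain ⟨δ, hδ, hδA, hδA'⟩ : ∃ δ > 0, δ ≤ μ.real A ∧ δ ≤ μ.real Aᶜ :=
    ⟨min (μ.real A) (μ.real Aᶜ), lt_min (ENNReal.toReal_pos hnull (by finiteness))
      (ENNReal.toReal_pos hconull (by finiteness)), min_le_left _ _, min_le_right _ _⟩
  obtain ⟨I, S, hS, hIS⟩ := exists_cylinder_symmDiff_lt hA
    (ENNReal.ofReal_pos.2 (show 0 < δ / 6 by positivity))
  have hε : μ.real (symmDiff (cylinder I S) A) ≤ δ / 6 :=
    ENNReal.toReal_le_of_le_ofReal (by positivity) hIS.le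
  have hc : 5 * δ / 6 ≤ μ.real (cylinder I S) := by
    linarith [measureReal_le_add_measureReal_symmDiff (μ := μ) (cylinder I S) A]
  have hcompl : 5 * δ / 6 ≤ μ.real (cylinder I S)ᶜ := by
    rw [← compl_symmDiff_compl] at hε
    linarith [measureReal_le_add_measureReal_symmDiff (μ := μ) (cylinder I S)ᶜ Aᶜ]
  obtain ⟨s, hs⟩ := exists_injective_smul_add I
  obtain ⟨k, hk⟩ := exists_card_piAntidiag_lt (ι := ι) (Fintype.card ι * s)
    (show 0 < 5 * δ / 6 / 2 - δ / 6 by linarith)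
  exact hk.not_ge (mul_pow_le_card_piAntidiag hA hrule hS hc hcompl hε hs k)

end ZeroOneLaw

section Kernel

theorem no_measurable_kernel_bernoulli_shift_general {ι X : Type*} [Finite ι] [DecidableEq ι]
    [Nonempty ι] [MeasurableSpace X] (ν : Measure X) [IsProbabilityMeasure ν] :
    ¬ ∃ A : Set ((ι → ℤ) → X), NullMeasurableSet A (iidMeasure (ι → ℤ) ν) ∧
      ∀ᵐ x ∂iidMeasure (ι → ℤ) ν, x ∈ A ↔ ∀ i, shift (Pi.single i 1) x ∉ A := by
  rintro ⟨A, hA, hker⟩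
  have hshift {p : ((ι → ℤ) → X) → Prop} (hp : ∀ᵐ x ∂iidMeasure (ι → ℤ) ν, p x) :
      ∀ᵐ x ∂iidMeasure (ι → ℤ) ν, ∀ i : ι, p (shift (Pi.single i 1) x) :=
    ae_all_iff.2 fun i => (measurePreserving_shift ν _).quasiMeasurePreserving.ae hp
  have hconst : EventuallyConst A (ae (iidMeasure (ι → ℤ) ν)) :=
    eventuallyConst_of_localRule (f := fun p => ∀ i, ¬ p i) hA hker
  rcases eventuallyConst_set.1 hconst with hfull | hempty
  · obtain ⟨x, hx, hkerx, hxi⟩ := (hfull.and (hker.and (hshift hfull))).exists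
    exact hkerx.1 hx (Classical.arbitrary ι) (hxi _)
  · obtain ⟨x, hx, hkerx, hxi⟩ := (hempty.and (hker.and (hshift hempty))).exists
    exact hx (hkerx.2 hxi)

lemma bernoulliShift_eq_shift (n : ℕ) : bernoulliShift n = shift := by
  ext g x h
  rw [bernoulliShift, shift_apply, add_comm]

lemma ae_mem_bernoulliFreePart (n : ℕ) {ν : Measure Bool} [IsProbabilityMeasure ν]
    (hν : ∀ b, ν {b} < 1) : ∀ᵐ x ∂iidMeasure (Fin n → ℤ) ν, x ∈ bernoulliFreePart n := by
  simp only [bernoulliFreePart, bernoulliShift_eq_shift, Set.mem_ofPred_eq, ae_all_iff]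
  exact fun g hg => ae_shift_ne_self hν (not_isOfFinAddOrder_of_isAddTorsionFree hg)

end Kernel

/-- **Proposition.** Let `μ` be the Bernoulli `(1/2, 1/2)` product measure on
`{0,1}^(ℤⁿ)` (characterized by its values on cylinder sets), `n ≥ 1`. Then the directed
Schreier graph of the Bernoulli shift on the free part `F(2^(ℤⁿ))` with respect to the
standard generators `e₁, …, eₙ` of `ℤⁿ` has no `μ`-measurable kernel: there is no
`μ`-measurable set `A ⊆ F(2^(ℤⁿ))` that is independent in the underlying graph and such
that every free point not in `A` has an out-neighbor in `A`. -/
theorem no_measurable_kernel_bernoulli_shift (n : ℕ) (hn : 1 ≤ n)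
    (μ : Measure ((Fin n → ℤ) → Bool)) [IsProbabilityMeasure μ]
    (hμ : ∀ (s : Finset (Fin n → ℤ)) (b : (Fin n → ℤ) → Bool),
      μ {x | ∀ g ∈ s, x g = b g} = (1 / 2 : ENNReal) ^ s.card) :
    ¬ ∃ A : Set ((Fin n → ℤ) → Bool),
      A ⊆ bernoulliFreePart n ∧ NullMeasurableSet A μ ∧
      (∀ x ∈ A, ∀ i : Fin n, bernoulliShift n (Pi.single i 1) x ∉ A) ∧
      (∀ x ∈ bernoulliFreePart n, x ∉ A →
        ∃ i : Fin n, bernoulliShift n (Pi.single i 1) x ∈ A) := by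
  rintro ⟨A, -, hA, hind, hdom⟩
  have : Nonempty (Fin n) := ⟨⟨0, hn⟩⟩
  obtain rfl : μ = iidMeasure (Fin n → ℤ) (PMF.uniformOfFintype Bool).toMeasure :=
    eq_infinitePi_of_forall_cylinder_eq_prod fun s b => by simp [hμ]
  refine no_measurable_kernel_bernoulli_shift_general _ ⟨A, hA, ?_⟩
  filter_upwards [ae_mem_bernoulliFreePart n (by simp)] with x hx
  rw [← bernoulliShift_eq_shift]
  refine ⟨hind x, fun hout => ?_⟩
  by_contra hxA
  obtain ⟨i, hi⟩ := hdom x hx hxA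
  exact hout i hi
end
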